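/- arXiv:math/0403250 — 2 statements merged into one kernel-verified Lean document; each statement's English description precedes it below -/
import Mathlib

section
/- Let B = H_{1,c}(Γ). For every finite-dimensional irreducible B-module Y, one has Ext¹_B(Y, Y) = 0; equivalently, the Hochschild cohomology H¹(B, End_ℂ Y) vanishes, where End_ℂ Y is a B-bimodule via the algebra homomorphism B → End_ℂ Y. -/
noncomputable section

/-- `SL(2,ℂ)`. -/
abbrev SL2 : Type := Matrix.SpecialLinearGroup (Fin 2) ℂ

/-- Generator `γ ∈ Γ` in the free algebra on `Γ ⊕ {x, y}`. -/
def bG (Γ : Subgroup SL2) (γ : Γ) : FreeAlgebra ℂ (Γ ⊕ Fin 2) :=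
  FreeAlgebra.ι ℂ (Sum.inl γ)

/-- The generator `x` (resp. `y`) for `p = 0` (resp. `p = 1`). -/
def bX (Γ : Subgroup SL2) (p : Fin 2) : FreeAlgebra ℂ (Γ ⊕ Fin 2) :=
  FreeAlgebra.ι ℂ (Sum.inr p)

/-- The general vector `v = v₀ x + v₁ y` of `L = ℂ²` inside the free algebra. -/
def bV (Γ : Subgroup SL2) (v : Fin 2 → ℂ) : FreeAlgebra ℂ (Γ ⊕ Fin 2) :=
  v 0 • bX Γ 0 + v 1 • bX Γ 1

/-- The defining relations of the symplectic reflection algebra `H_{1,c}(Γ)` of rank 1: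
the group relations of `Γ`, the relations `γ v γ⁻¹ = γ(v)` for `v ∈ L = ℂ²`, and the
relation `xy - yx = λ(c) = 1 + ∑_{γ ≠ 1} c_γ γ`. -/
inductive BRel (Γ : Subgroup SL2) [Fintype Γ] [DecidableEq Γ] (c : Γ → ℂ) :
    FreeAlgebra ℂ (Γ ⊕ Fin 2) → FreeAlgebra ℂ (Γ ⊕ Fin 2) → Prop
  | grp_mul (γ δ : Γ) : BRel Γ c (bG Γ γ * bG Γ δ) (bG Γ (γ * δ))
  | grp_one : BRel Γ c (bG Γ 1) 1
  | grp_conj (γ : Γ) (v : Fin 2 → ℂ) :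
      BRel Γ c (bG Γ γ * bV Γ v * bG Γ γ⁻¹)
        (bV Γ (Matrix.mulVec ((γ : SL2) : Matrix (Fin 2) (Fin 2) ℂ) v))
  | comm : BRel Γ c (bX Γ 0 * bX Γ 1 - bX Γ 1 * bX Γ 0)
      (1 + ∑ γ ∈ Finset.univ.filter (fun γ : Γ => γ ≠ 1), c γ • bG Γ γ)

/-- The symplectic reflection algebra `B = H_{1,c}(Γ)` of rank 1. -/
abbrev Hone (Γ : Subgroup SL2) [Fintype Γ] [DecidableEq Γ] (c : Γ → ℂ) : Type :=
  RingQuot (BRel Γ c)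

/-- The image of the group element `γ ∈ Γ` in `H_{1,c}(Γ)`. -/
def oneG (Γ : Subgroup SL2) [Fintype Γ] [DecidableEq Γ] (c : Γ → ℂ) (γ : Γ) : Hone Γ c :=
  RingQuot.mkAlgHom ℂ (BRel Γ c) (bG Γ γ)

/-- The image of `x` (`p = 0`) resp. `y` (`p = 1`) in `H_{1,c}(Γ)`. -/
def oneX (Γ : Subgroup SL2) [Fintype Γ] [DecidableEq Γ] (c : Γ → ℂ) (p : Fin 2) : Hone Γ c :=
  RingQuot.mkAlgHom ℂ (BRel Γ c) (bX Γ p)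

/-- A bimodule structure (compatible with the `ℂ`-structures) on a `ℂ`-vector space `E`
over a `ℂ`-algebra `A`: commuting left and right `A`-actions `l` and `r`. -/
structure BimodStr (A : Type) [Ring A] [Algebra ℂ A]
    (E : Type) [AddCommGroup E] [Module ℂ E] where
  l : A → E →ₗ[ℂ] E
  r : A → E →ₗ[ℂ] E
  l_one : l 1 = LinearMap.id
  l_mul : ∀ a b, l (a * b) = l a ∘ₗ l b
  l_add : ∀ a b, l (a + b) = l a + l b
  l_smul : ∀ (z : ℂ) (a), l (z • a) = z • l a
  r_one : r 1 = LinearMap.id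
  r_mul : ∀ a b, r (a * b) = r b ∘ₗ r a
  r_add : ∀ a b, r (a + b) = r a + r b
  r_smul : ∀ (z : ℂ) (a), r (z • a) = z • r a
  comm : ∀ a b, l a ∘ₗ r b = r b ∘ₗ l a

variable {A : Type} [Ring A] [Algebra ℂ A] {E : Type} [AddCommGroup E] [Module ℂ E]

/-- The space `C^n(A, E)` of Hochschild `n`-cochains: `n`-linear maps `A^n → E`. -/
abbrev Cochain (A : Type) [Ring A] [Algebra ℂ A] (E : Type) [AddCommGroup E] [Module ℂ E]
    (n : ℕ) : Type :=
  MultilinearMap ℂ (fun _ : Fin n => A) E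

/-- The Hochschild differential:
`(dφ)(a₀, …, aₙ) = a₀ · φ(a₁, …, aₙ) + ∑ᵢ (-1)^(i+1) φ(a₀, …, aᵢ aᵢ₊₁, …, aₙ)
  + (-1)^(n+1) φ(a₀, …, a_{n-1}) · aₙ`. -/
def dF (β : BimodStr A E) {n : ℕ} (φ : Cochain A E n) (a : Fin (n + 1) → A) : E :=
  β.l (a 0) (φ fun i => a i.succ)
    + ∑ i : Fin n, ((-1 : ℂ) ^ ((i : ℕ) + 1)) •
        φ (fun j => if (j : ℕ) < (i : ℕ) then a j.castSucc
            else if (j : ℕ) = (i : ℕ) then a j.castSucc * a j.succ else a j.succ)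
    + ((-1 : ℂ) ^ (n + 1)) • β.r (a (Fin.last n)) (φ fun i => a i.castSucc)

lemma dF_add (β : BimodStr A E) {n : ℕ} (φ ψ : Cochain A E n) (a : Fin (n + 1) → A) :
    dF β (φ + ψ) a = dF β φ a + dF β ψ a := by
  simp only [dF, MultilinearMap.add_apply, map_add, smul_add, Finset.sum_add_distrib]
  abel

lemma dF_smul (β : BimodStr A E) {n : ℕ} (z : ℂ) (φ : Cochain A E n) (a : Fin (n + 1) → A) :
    dF β (z • φ) a = z • dF β φ a := by
  simp only [dF, MultilinearMap.smul_apply, map_smul, smul_add, Finset.smul_sum,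
    smul_comm _ z]

lemma dF_zero (β : BimodStr A E) {n : ℕ} (a : Fin (n + 1) → A) :
    dF β (0 : Cochain A E n) a = 0 := by
  simp [dF]

/-- The space `Z^n(A, E)` of Hochschild `n`-cocycles. -/
def Zc (β : BimodStr A E) (n : ℕ) : Submodule ℂ (Cochain A E n) where
  carrier := {φ | ∀ a, dF β φ a = 0}
  zero_mem' := fun a => dF_zero β a
  add_mem' := fun hφ hψ a => by rw [dF_add, hφ a, hψ a, add_zero]
  smul_mem' := fun z φ hφ a => by rw [dF_smul, hφ a, smul_zero]

/-- The space `B^{n+1}(A, E)` of Hochschild `(n+1)`-coboundaries. -/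
def Bc (β : BimodStr A E) (n : ℕ) : Submodule ℂ (Cochain A E (n + 1)) where
  carrier := {φ | ∃ ψ : Cochain A E n, ∀ a, φ a = dF β ψ a}
  zero_mem' := ⟨0, fun a => (dF_zero β a).symm⟩
  add_mem' := by
    rintro φ₁ φ₂ ⟨ψ₁, h₁⟩ ⟨ψ₂, h₂⟩
    exact ⟨ψ₁ + ψ₂, fun a => by
      rw [MultilinearMap.add_apply, dF_add, h₁ a, h₂ a]⟩
  smul_mem' := by
    rintro z φ ⟨ψ, h⟩
    exact ⟨z • ψ, fun a => by rw [MultilinearMap.smul_apply, dF_smul, h a]⟩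

/-- The Hochschild cohomology `H^{n+1}(A, E)` as a quotient of cocycles by coboundaries. -/
abbrev HH (β : BimodStr A E) (n : ℕ) : Type :=
  ↥(Zc β (n + 1)) ⧸ (Bc β n).comap (Zc β (n + 1)).subtype

/-- The bimodule structure on `End_ℂ Y` induced by an algebra homomorphism
`ρ : A → End_ℂ Y`. -/
def bimodEnd {Y : Type} [AddCommGroup Y] [Module ℂ Y] (ρ : A →ₐ[ℂ] Module.End ℂ Y) :
    BimodStr A (Module.End ℂ Y) where
  l a := LinearMap.mulLeft ℂ (ρ a)
  r a := LinearMap.mulRight ℂ (ρ a)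
  l_one := by ext e; simp
  l_mul a b := by ext e; simp [mul_assoc]
  l_add a b := by ext e; simp [add_mul]
  l_smul z a := by ext e; simp [smul_mul_assoc]
  r_one := by ext e; simp
  r_mul a b := by ext e; simp [mul_assoc]
  r_add a b := by ext e; simp [mul_add]
  r_smul z a := by ext e; simp [mul_smul_comm]
  comm a b := by ext e; simp [mul_assoc]
end

open scoped ComplexOrder MatrixOrder in
theorem aux_unitary {G n : Type} [Group G] [Fintype G] [Fintype n] [DecidableEq n]
    (M : G →* Matrix n n ℂ) : ∃ P Q : Matrix n n ℂ, P * Q = 1 ∧ Q * P = 1 ∧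
      ∀ g, (P * M g * Q).conjTranspose * (P * M g * Q) = 1 := by
  classical
  set H : Matrix n n ℂ := ∑ g, (M g).conjTranspose * M g with hH
  have hpd : H.PosDef := by
    rw [hH, ← Finset.add_sum_erase _ _ (Finset.mem_univ (1 : G))]
    refine Matrix.PosDef.add_posSemidef ?_ ?_
    · simpa using Matrix.PosDef.one
    · exact Matrix.posSemidef_sum _ fun g _ => Matrix.posSemidef_conjTranspose_mul_self _
  have hinv : ∀ g, (M g).conjTranspose * H * M g = H := by
    intro g
    rw [hH, Finset.mul_sum, Finset.sum_mul]
    rw [← Equiv.sum_comp (Equiv.mulRight g) (fun g => (M g).conjTranspose * M g)]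
    refine Finset.sum_congr rfl fun h _ => ?_
    simp [Matrix.mul_assoc]
  obtain ⟨P, hP⟩ := CStarAlgebra.nonneg_iff_eq_star_mul_self.mp hpd.posSemidef.nonneg
  rw [Matrix.star_eq_conjTranspose] at hP
  have hPu : IsUnit P := by
    have := hpd.isUnit
    rw [hP] at this
    rw [Matrix.isUnit_iff_isUnit_det] at this ⊢
    rw [Matrix.det_mul] at this
    exact isUnit_of_mul_isUnit_right this
  rw [Matrix.isUnit_iff_isUnit_det] at hPu
  refine ⟨P, P⁻¹, Matrix.mul_nonsing_inv _ hPu, Matrix.nonsing_inv_mul _ hPu, fun g => ?_⟩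
  have h1 : (P * M g * P⁻¹).conjTranspose * (P * M g * P⁻¹) =
      P⁻¹.conjTranspose * ((M g).conjTranspose * (P.conjTranspose * P) * M g) * P⁻¹ := by
    simp only [Matrix.conjTranspose_mul, Matrix.mul_assoc]
  rw [h1, ← hP, hinv, hP, Matrix.mul_assoc, Matrix.mul_assoc, Matrix.mul_nonsing_inv _ hPu,
    Matrix.mul_one, ← Matrix.conjTranspose_mul, Matrix.mul_nonsing_inv _ hPu,
    Matrix.conjTranspose_one]

theorem aux_trace_inv {G n : Type} [Group G] [Fintype G] [Fintype n] [DecidableEq n]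
    (M : G →* Matrix n n ℂ) (g : G) : (M g⁻¹).trace = star (M g).trace := by
  obtain ⟨P, Q, hPQ, hQP, h⟩ := aux_unitary M
  have h2 : (P * M g * Q) * (P * M g⁻¹ * Q) = 1 := by
    have : (P * M g * Q) * (P * M g⁻¹ * Q) = P * (M g * (Q * P) * M g⁻¹) * Q := by
      simp only [Matrix.mul_assoc]
    rw [this, hQP, Matrix.mul_one, ← map_mul]
    simp [hPQ]
  have h3 : (P * M g⁻¹ * Q) = (P * M g * Q).conjTranspose := by
    calc _ = (P * M g * Q).conjTranspose * (P * M g * Q) * (P * M g⁻¹ * Q) := by rw [h, one_mul]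
      _ = _ := by rw [Matrix.mul_assoc, h2, mul_one]
  have ht : ∀ X : Matrix n n ℂ, (P * X * Q).trace = X.trace := by
    intro X
    rw [Matrix.trace_mul_comm, ← Matrix.mul_assoc, hQP, one_mul]
  rw [← ht, h3, Matrix.trace_conjTranspose, ht]

open scoped ComplexOrder MatrixOrder in
theorem aux_trace_lt {G n : Type} [Group G] [Fintype G] [Fintype n] [DecidableEq n]
    (M : G →* Matrix n n ℂ) (g : G) (hg : M g ≠ 1) : (M g).trace.re < Fintype.card n := by
  obtain ⟨P, Q, hPQ, hQP, h⟩ := aux_unitary M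
  set U := P * M g * Q with hU
  have ht : U.trace = (M g).trace := by
    rw [hU, Matrix.trace_mul_comm, ← Matrix.mul_assoc, hQP, one_mul]
  have hne : U - 1 ≠ 0 := by
    intro h0
    apply hg
    have h1 : U = 1 := sub_eq_zero.mp h0
    calc M g = (Q * P) * M g * (Q * P) := by rw [hQP, one_mul, mul_one]
      _ = Q * U * P := by rw [hU]; simp only [Matrix.mul_assoc]
      _ = 1 := by rw [h1, mul_one, hQP]
  have hps := (Matrix.posSemidef_conjTranspose_mul_self (U - 1)).trace_nonneg
  have hnz : ((U - 1).conjTranspose * (U - 1)).trace ≠ 0 := by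
    rwa [Ne, Matrix.trace_conjTranspose_mul_self_eq_zero_iff]
  have he : (U - 1).conjTranspose * (U - 1) = 1 - U.conjTranspose - U + 1 := by
    rw [Matrix.conjTranspose_sub, Matrix.conjTranspose_one, sub_mul, mul_sub, mul_sub, h]
    simp; abel
  have hpos := lt_of_le_of_ne hps hnz.symm
  rw [he] at hpos
  have := (Complex.lt_def.mp hpos).1
  simp [Matrix.trace_add, Matrix.trace_sub, Matrix.trace_conjTranspose, ht] at this
  linarith

/-- isotropic subspaces of almost half dimension are Lagrangian -/
theorem aux_lagr {V : Type} [AddCommGroup V] [Module ℂ V] [FiniteDimensional ℂ V]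
    (B : LinearMap.BilinForm ℂ V) (hB : B.Nondegenerate) (ha : B.IsAlt) (I : Submodule ℂ V)
    (hI : I ≤ B.orthogonal I)
    (hd : Module.finrank ℂ V ≤ 2 * Module.finrank ℂ I + 1) : B.orthogonal I ≤ I := by
  intro f hf
  by_contra hfI
  have hlt : I < I ⊔ Submodule.span ℂ {f} := by
    refine lt_of_le_of_ne le_sup_left fun h => hfI ?_
    rw [h]
    exact Submodule.mem_sup_right (Submodule.mem_span_singleton_self f)
  have hle : I ⊔ Submodule.span ℂ {f} ≤ B.orthogonal I :=
    sup_le hI (by simpa [Submodule.span_le] using hf)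
  have hfr := LinearMap.BilinForm.finrank_orthogonal hB I
  have h1 := Submodule.finrank_lt_finrank_of_lt hlt
  have heq : I ⊔ Submodule.span ℂ {f} = B.orthogonal I :=
    Submodule.eq_of_le_of_finrank_le hle (by omega)
  have : f ∈ B.orthogonal (B.orthogonal I) := by
    rw [← heq]
    intro v hv
    obtain ⟨a, haI, b, hb, rfl⟩ := Submodule.mem_sup.mp hv
    obtain ⟨z, rfl⟩ := Submodule.mem_span_singleton.mp hb
    have h2 : B a f = 0 := hf a haI
    have h3 : B f f = 0 := ha f
    simp [h2, h3]
  rw [LinearMap.BilinForm.orthogonal_orthogonal hB ha.isRefl] at this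
  exact hfI this

/-- the tautological representation -/
noncomputable def auxTau (Γ : Subgroup SL2) : Representation ℂ Γ (Fin 2 → ℂ) where
  toFun γ := Matrix.mulVecLin ((γ : SL2) : Matrix (Fin 2) (Fin 2) ℂ)
  map_one' := by ext; simp
  map_mul' a b := by ext; simp

theorem aux_char_inv {G V : Type} [Group G] [Fintype G] [AddCommGroup V] [Module ℂ V]
    [FiniteDimensional ℂ V] (σ : Representation ℂ G V) (g : G) :
    σ.character g⁻¹ = star (σ.character g) := by
  let b := Module.finBasis ℂ V
  let M : G →* Matrix _ _ ℂ := (LinearMap.toMatrixAlgEquiv b).toMulEquiv.toMonoidHom.comp σ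
  have := aux_trace_inv M g
  have h : ∀ g, σ.character g = (M g).trace := fun g =>
    LinearMap.trace_eq_matrix_trace ℂ b (σ g)
  rw [h, h, this]

theorem aux_tau_char (Γ : Subgroup SL2) (γ : Γ) :
    (auxTau Γ).character γ = ((γ : SL2) : Matrix (Fin 2) (Fin 2) ℂ).trace := by
  have : auxTau Γ γ = Matrix.toLin' ((γ : SL2) : Matrix (Fin 2) (Fin 2) ℂ) := rfl
  rw [Representation.character, this, Matrix.trace_toLin'_eq]

theorem aux_tau_lt (Γ : Subgroup SL2) [Fintype Γ] (γ : Γ) (h : γ ≠ 1) :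
    ((auxTau Γ).character γ).re < 2 := by
  let M : Γ →* Matrix (Fin 2) (Fin 2) ℂ :=
    { toFun := fun γ => ((γ : SL2) : Matrix (Fin 2) (Fin 2) ℂ)
      map_one' := by simp
      map_mul' := by intros; simp }
  have := aux_trace_lt M γ (by
    intro h1
    apply h
    apply Subtype.ext
    apply Subtype.ext
    exact h1)
  rw [aux_tau_char]
  rw [Fintype.card_fin] at this
  exact_mod_cast this

theorem aux_tau_inv (Γ : Subgroup SL2) [Fintype Γ] (γ : Γ) :
    (auxTau Γ).character γ⁻¹ = (auxTau Γ).character γ := by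
  rw [aux_tau_char, aux_tau_char]
  rw [Subgroup.coe_inv, Matrix.SpecialLinearGroup.coe_inv, Matrix.adjugate_fin_two,
    Matrix.trace_fin_two, Matrix.trace_fin_two]
  simp [add_comm]

theorem aux_dim (Γ : Subgroup SL2) [Fintype Γ] {Y : Type} [AddCommGroup Y] [Module ℂ Y]
    [FiniteDimensional ℂ Y] (σ : Representation ℂ Γ Y)
    (h : ∃ γ : Γ, γ ≠ 1 ∧ σ.character γ ≠ 0) :
    Module.finrank ℂ ((auxTau Γ).linHom (σ.linHom σ)).invariants + 1 ≤
      2 * Module.finrank ℂ (σ.linHom σ).invariants := by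
  have hc : (Nat.card Γ : ℂ) ≠ 0 := by simp
  let _ : Invertible (Nat.card Γ : ℂ) := invertibleOfNonzero hc
  have h1 := Representation.card_inv_mul_sum_char_eq_finrank ((auxTau Γ).linHom (σ.linHom σ))
  have h2 := Representation.card_inv_mul_sum_char_eq_finrank (σ.linHom σ)
  simp only [Representation.char_linHom, aux_tau_inv, aux_char_inv σ] at h1 h2
  rw [inv_mul_eq_iff_eq_mul₀ hc] at h1 h2
  have hre : ∀ γ, (auxTau Γ).character γ = (((auxTau Γ).character γ).re : ℂ) := by
    intro γ
    have := aux_char_inv (auxTau Γ) γ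
    rw [aux_tau_inv] at this
    exact (Complex.conj_eq_iff_re.mp this.symm).symm
  have hns : ∀ z : ℂ, star z * z = ((Complex.normSq z : ℝ) : ℂ) := by
    intro z; exact (Complex.normSq_eq_conj_mul_self).symm
  simp only [hns] at h1 h2
  have h1' : ∑ γ, ((auxTau Γ).character γ).re * Complex.normSq (σ.character γ) =
      Nat.card Γ * (Module.finrank ℂ ((auxTau Γ).linHom (σ.linHom σ)).invariants : ℝ) := by
    have := congrArg Complex.re h1
    simpa using this
  have h2' : ∑ γ, Complex.normSq (σ.character γ) =
      Nat.card Γ * (Module.finrank ℂ (σ.linHom σ).invariants : ℝ) := by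
    have := congrArg Complex.re h2
    simpa using this
  have h3 : ∑ γ, ((auxTau Γ).character γ).re * Complex.normSq (σ.character γ) <
      ∑ γ, 2 * Complex.normSq (σ.character γ) := by
    obtain ⟨γ, hγ, hχ⟩ := h
    refine Finset.sum_lt_sum (fun δ _ => ?_) ⟨γ, Finset.mem_univ _, ?_⟩
    · refine mul_le_mul_of_nonneg_right ?_ (Complex.normSq_nonneg _)
      by_cases hδ : δ = 1
      · subst hδ; simp
      · exact (aux_tau_lt Γ δ hδ).le
    · exact mul_lt_mul_of_pos_right (aux_tau_lt Γ γ hγ) (Complex.normSq_pos.mpr hχ)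
  rw [← Finset.mul_sum, h1', h2', mul_left_comm] at h3
  have h4 := lt_of_mul_lt_mul_left h3 (by positivity)
  exact_mod_cast h4

theorem aux_chi {G Y : Type} [Group G] [Fintype G] [DecidableEq G] [AddCommGroup Y] [Module ℂ Y]
    [FiniteDimensional ℂ Y] [Nontrivial Y] (σ : Representation ℂ G Y) (c : G → ℂ)
    (a b : Module.End ℂ Y)
    (h : a * b - b * a = 1 + ∑ γ ∈ Finset.univ.filter (fun γ : G => γ ≠ 1), c γ • σ γ) :
    ∃ γ : G, γ ≠ 1 ∧ σ.character γ ≠ 0 := by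
  by_contra! hn
  have := congrArg (LinearMap.trace ℂ Y) h
  rw [map_sub, LinearMap.trace_mul_comm, sub_self, map_add, map_sum, Finset.sum_eq_zero,
    LinearMap.trace_one, add_zero] at this
  · have h0 : Module.finrank ℂ Y ≠ 0 := Module.finrank_pos.ne'
    exact h0 (by exact_mod_cast this.symm)
  · intro γ hγ
    have := hn γ (by simpa using hγ)
    rw [Representation.character] at this
    simp [this]

/-- The symplectic form. -/
noncomputable def auxOm (Y : Type) [AddCommGroup Y] [Module ℂ Y] :
    LinearMap.BilinForm ℂ ((Fin 2 → ℂ) →ₗ[ℂ] (Y →ₗ[ℂ] Y)) :=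
  LinearMap.mk₂ ℂ (fun f g => LinearMap.trace ℂ Y
      (f (Pi.single 0 1) * g (Pi.single 1 1)) - LinearMap.trace ℂ Y
      (f (Pi.single 1 1) * g (Pi.single 0 1)))
    (by intros; simp [add_mul]; ring)
    (by intros; simp; ring)
    (by intros; simp [mul_add]; ring)
    (by intros; simp; ring)

theorem auxOm_apply {Y : Type} [AddCommGroup Y] [Module ℂ Y]
    (f g : (Fin 2 → ℂ) →ₗ[ℂ] (Y →ₗ[ℂ] Y)) : auxOm Y f g = LinearMap.trace ℂ Y
      (f (Pi.single 0 1) * g (Pi.single 1 1)) - LinearMap.trace ℂ Y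
      (f (Pi.single 1 1) * g (Pi.single 0 1)) := rfl

theorem auxOm_alt {Y : Type} [AddCommGroup Y] [Module ℂ Y] : (auxOm Y).IsAlt := by
  intro f
  rw [auxOm_apply, LinearMap.trace_mul_comm, sub_self]

theorem aux_trace_nondeg {Y : Type} [AddCommGroup Y] [Module ℂ Y] [FiniteDimensional ℂ Y]
    (a : Y →ₗ[ℂ] Y) (h : ∀ b : Y →ₗ[ℂ] Y, LinearMap.trace ℂ Y (a * b) = 0) : a = 0 := by
  ext y
  rw [LinearMap.zero_apply, ← Module.forall_dual_apply_eq_zero_iff ℂ]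
  intro φ
  have := h (LinearMap.smulRight φ y)
  have h2 : a * LinearMap.smulRight φ y = LinearMap.smulRight φ (a y) := by
    ext; simp
  rw [h2, LinearMap.trace_smulRight] at this
  exact this

theorem auxOm_nondeg {Y : Type} [AddCommGroup Y] [Module ℂ Y] [FiniteDimensional ℂ Y]
    (f : (Fin 2 → ℂ) →ₗ[ℂ] (Y →ₗ[ℂ] Y)) (h : ∀ g, auxOm Y f g = 0) : f = 0 := by
  have key : ∀ i : Fin 2, f (Pi.single i 1) = 0 := by
    intro i
    apply aux_trace_nondeg
    intro b
    fin_cases i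
    · simpa [auxOm_apply] using h (LinearMap.smulRight (LinearMap.proj 1) b)
    · simpa [auxOm_apply] using h (LinearMap.smulRight (LinearMap.proj 0) b)
  refine LinearMap.pi_ext' fun i => ?_
  ext1
  simpa using key i

theorem aux_expand {M : Type} [AddCommGroup M] [Module ℂ M] (f : (Fin 2 → ℂ) →ₗ[ℂ] M)
    (v : Fin 2 → ℂ) : f v = v 0 • f (Pi.single 0 1) + v 1 • f (Pi.single 1 1) := by
  rw [← map_smul, ← map_smul, ← map_add]
  congr 1
  ext i; fin_cases i <;> simp

theorem aux_W_apply (Γ : Subgroup SL2) {Y : Type} [AddCommGroup Y] [Module ℂ Y]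
    (σ : Representation ℂ Γ Y) (γ : Γ) (f : (Fin 2 → ℂ) →ₗ[ℂ] (Y →ₗ[ℂ] Y)) (v : Fin 2 → ℂ) :
    (((auxTau Γ).linHom (σ.linHom σ)) γ f) v = σ γ * f (auxTau Γ γ⁻¹ v) * σ γ⁻¹ := rfl

theorem auxOm_inv (Γ : Subgroup SL2) {Y : Type} [AddCommGroup Y] [Module ℂ Y]
    (σ : Representation ℂ Γ Y) (γ : Γ) (f g : (Fin 2 → ℂ) →ₗ[ℂ] (Y →ₗ[ℂ] Y)) :
    auxOm Y ((auxTau Γ).linHom (σ.linHom σ) γ f) ((auxTau Γ).linHom (σ.linHom σ) γ g) =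
      auxOm Y f g := by
  have ht : ∀ a b : Module.End ℂ Y, LinearMap.trace ℂ Y
      ((σ γ * a * σ γ⁻¹) * (σ γ * b * σ γ⁻¹)) = LinearMap.trace ℂ Y (a * b) := by
    intro a b
    have e1 : σ γ⁻¹ * σ γ = 1 := by rw [← map_mul]; simp
    have : (σ γ * a * σ γ⁻¹) * (σ γ * b * σ γ⁻¹) = σ γ * (a * (σ γ⁻¹ * σ γ) * b * σ γ⁻¹) := by
      simp only [mul_assoc]
    rw [this, e1, mul_one, LinearMap.trace_mul_comm, mul_assoc, e1, mul_one]
  have hdet := Matrix.det_fin_two ((γ⁻¹ : SL2) : Matrix (Fin 2) (Fin 2) ℂ)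
  rw [Matrix.SpecialLinearGroup.det_coe] at hdet
  have hm : ∀ i j : Fin 2, (auxTau Γ γ⁻¹ (Pi.single i 1)) j =
      ((γ⁻¹ : SL2) : Matrix (Fin 2) (Fin 2) ℂ) j i := by
    intro i j
    exact congrFun (Matrix.mulVec_single_one ((γ⁻¹ : SL2) : Matrix (Fin 2) (Fin 2) ℂ) i) j
  rw [auxOm_apply, auxOm_apply]
  simp only [aux_W_apply]
  rw [ht, ht]
  rw [aux_expand f (auxTau Γ γ⁻¹ (Pi.single 0 1)), aux_expand g (auxTau Γ γ⁻¹ (Pi.single 0 1)),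
   aux_expand f (auxTau Γ γ⁻¹ (Pi.single 1 1)), aux_expand g (auxTau Γ γ⁻¹ (Pi.single 1 1))]
  simp only [hm, add_mul, mul_add, map_add, smul_mul_assoc, mul_smul_comm, map_smul, smul_eq_mul]
  linear_combination (-LinearMap.trace ℂ Y
      (f (Pi.single 0 1) * g (Pi.single 1 1)) + LinearMap.trace ℂ Y
      (f (Pi.single 1 1) * g (Pi.single 0 1))) * hdet

theorem auxOm_nondeg_inv (Γ : Subgroup SL2) [Fintype Γ] {Y : Type} [AddCommGroup Y] [Module ℂ Y]
    [FiniteDimensional ℂ Y] (σ : Representation ℂ Γ Y)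
    (f : (Fin 2 → ℂ) →ₗ[ℂ] (Y →ₗ[ℂ] Y)) (hf : f ∈ ((auxTau Γ).linHom (σ.linHom σ)).invariants)
    (h : ∀ g ∈ ((auxTau Γ).linHom (σ.linHom σ)).invariants, auxOm Y f g = 0) : f = 0 := by
  apply auxOm_nondeg
  intro g
  have h1 := h (∑ γ, (auxTau Γ).linHom (σ.linHom σ) γ g) (by
    intro δ
    rw [map_sum, ← Equiv.sum_comp (Equiv.mulLeft δ)
      (fun γ => (auxTau Γ).linHom (σ.linHom σ) γ g)]
    refine Finset.sum_congr rfl fun γ _ => ?_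
    simp only [Equiv.coe_mulLeft, map_mul]
    rfl)
  have h2 : ∀ γ, auxOm Y f ((auxTau Γ).linHom (σ.linHom σ) γ g) = auxOm Y f g := by
    intro γ
    conv_lhs => rw [← hf γ]
    exact auxOm_inv Γ σ γ f g
  rw [map_sum, Finset.sum_congr rfl fun γ _ => h2 γ] at h1
  simpa using h1

/-- commutator with `ξ` -/
noncomputable def auxD {Y : Type} [AddCommGroup Y] [Module ℂ Y]
    (ξ : (Fin 2 → ℂ) →ₗ[ℂ] (Y →ₗ[ℂ] Y)) :
    (Y →ₗ[ℂ] Y) →ₗ[ℂ] ((Fin 2 → ℂ) →ₗ[ℂ] (Y →ₗ[ℂ] Y)) where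
  toFun a :=
    { toFun := fun v => ξ v * a - a * ξ v
      map_add' := by intros; simp only [map_add, add_mul, mul_add]; abel
      map_smul' := by
        intros
        simp only [map_smul, smul_mul_assoc, mul_smul_comm, smul_sub, RingHom.id_apply] }
  map_add' a b := by
    refine LinearMap.ext fun v => ?_
    show ξ v * (a + b) - (a + b) * ξ v = (ξ v * a - a * ξ v) + (ξ v * b - b * ξ v)
    rw [mul_add, add_mul]; abel
  map_smul' z a := by
    refine LinearMap.ext fun v => ?_
    show ξ v * (z • a) - (z • a) * ξ v = z • (ξ v * a - a * ξ v)
    rw [mul_smul_comm, smul_mul_assoc, smul_sub]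

theorem auxD_apply {Y : Type} [AddCommGroup Y] [Module ℂ Y]
    (ξ : (Fin 2 → ℂ) →ₗ[ℂ] (Y →ₗ[ℂ] Y)) (a : Y →ₗ[ℂ] Y) (v : Fin 2 → ℂ) :
    auxD ξ a v = ξ v * a - a * ξ v := rfl

theorem aux_inv_comm {G Y : Type} [Group G] [AddCommGroup Y] [Module ℂ Y]
    (σ : Representation ℂ G Y) (a : Module.End ℂ Y) (ha : a ∈ (σ.linHom σ).invariants) (g : G) :
    σ g * a = a * σ g := by
  have h : σ g * (a * σ g⁻¹) = a := ha g
  have e1 : σ g⁻¹ * σ g = 1 := by rw [← map_mul]; simp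
  conv_rhs => rw [← h]
  rw [mul_assoc, mul_assoc, e1, mul_one]

/-- the trace identity -/
theorem auxOm_D {Y : Type} [AddCommGroup Y] [Module ℂ Y]
    (ξ f : (Fin 2 → ℂ) →ₗ[ℂ] (Y →ₗ[ℂ] Y)) (a : Module.End ℂ Y)
    (hf : (ξ (Pi.single 0 1) * f (Pi.single 1 1) - f (Pi.single 1 1) * ξ (Pi.single 0 1)) +
      (f (Pi.single 0 1) * ξ (Pi.single 1 1) - ξ (Pi.single 1 1) * f (Pi.single 0 1)) = 0) :
    auxOm Y (auxD ξ a) f = 0 := by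
  rw [auxOm_apply, auxD_apply, auxD_apply]
  generalize ξ (Pi.single 0 1) = x at *
  generalize ξ (Pi.single 1 1) = y at *
  generalize f (Pi.single 0 1) = p at *
  generalize f (Pi.single 1 1) = q at *
  have h := congrArg (fun b => LinearMap.trace ℂ Y (a * b)) hf
  simp only [mul_add, mul_sub, map_add, map_sub, mul_zero, map_zero] at h
  simp only [sub_mul, map_sub]
  have h1 : LinearMap.trace ℂ Y (x * a * q) = LinearMap.trace ℂ Y (a * (q * x)) := by
    rw [mul_assoc, LinearMap.trace_mul_comm, mul_assoc]
  have h2 : LinearMap.trace ℂ Y (y * a * p) = LinearMap.trace ℂ Y (a * (p * y)) := by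
    rw [mul_assoc, LinearMap.trace_mul_comm, mul_assoc]
  rw [h1, h2, mul_assoc, mul_assoc]
  linear_combination -h

theorem aux_abs {E W : Type} [AddCommGroup E] [Module ℂ E] [FiniteDimensional ℂ E]
    [AddCommGroup W] [Module ℂ W] [FiniteDimensional ℂ W] (E0 : Submodule ℂ E)
    (V : Submodule ℂ W) (D : E →ₗ[ℂ] W) (om : LinearMap.BilinForm ℂ W) (halt : om.IsAlt)
    (hnd : ∀ f ∈ V, (∀ g ∈ V, om f g = 0) → f = 0)
    (hdim : Module.finrank ℂ V + 1 ≤ 2 * Module.finrank ℂ E0)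
    (hmem : ∀ a ∈ E0, D a ∈ V)
    (u : E) (hker : ∀ a ∈ E0, D a = 0 → ∃ z : ℂ, a = z • u)
    (hiso : ∀ a ∈ E0, ∀ b ∈ E0, om (D a) (D b) = 0)
    (f : W) (hfV : f ∈ V) (hf : ∀ a ∈ E0, om (D a) f = 0) : ∃ a ∈ E0, D a = f := by
  let d : E0 →ₗ[ℂ] V := LinearMap.codRestrict V (D.domRestrict E0) fun a => hmem a.1 a.2
  have hdv : ∀ a, (d a : W) = D a := fun a => rfl
  have hk : Module.finrank ℂ (LinearMap.ker d) ≤ 1 := by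
    have h1 : (LinearMap.ker d).map E0.subtype ≤ Submodule.span ℂ {u} := by
      rintro _ ⟨a, ha, rfl⟩
      obtain ⟨z, hz⟩ := hker a.1 a.2 (by
        have := congrArg Subtype.val (LinearMap.mem_ker.mp ha)
        rwa [hdv] at this)
      exact Submodule.mem_span_singleton.mpr ⟨z, hz.symm⟩
    have h2 := Submodule.finrank_mono h1
    have h3 : Module.finrank ℂ (Submodule.span ℂ {u}) ≤ 1 := by
      simpa using finrank_span_le_card (R := ℂ) ({u} : Set E)
    rw [Submodule.finrank_map_subtype_eq] at h2
    exact h2.trans h3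
  have hrk := LinearMap.finrank_range_add_finrank_ker d
  let B := om.restrict V
  have hBa : B.IsAlt := fun x => halt x.1
  have hB : B.Nondegenerate := by
    refine (LinearMap.IsRefl.nondegenerate_iff_separatingLeft (B := B) hBa.isRefl).mpr ?_
    rintro ⟨g, hg⟩ h
    apply Subtype.ext
    exact hnd g hg fun w hw => h ⟨w, hw⟩
  have hL := aux_lagr B hB hBa (LinearMap.range d)
    (by
      rintro _ ⟨b, rfl⟩ _ ⟨a, rfl⟩
      exact hiso a.1 a.2 b.1 b.2) (by omega)
  have hfo : (⟨f, hfV⟩ : V) ∈ B.orthogonal (LinearMap.range d) := by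
    rintro _ ⟨a, rfl⟩
    exact hf a.1 a.2
  obtain ⟨a, ha⟩ := hL hfo
  exact ⟨a.1, a.2, congrArg Subtype.val ha⟩

theorem aux_main (Γ : Subgroup SL2) [Fintype Γ] [DecidableEq Γ] (c : Γ → ℂ)
    {Y : Type} [AddCommGroup Y] [Module ℂ Y] [FiniteDimensional ℂ Y] [Nontrivial Y]
    (σ : Representation ℂ Γ Y) (ξ f : (Fin 2 → ℂ) →ₗ[ℂ] (Y →ₗ[ℂ] Y))
    (hξ : ξ ∈ ((auxTau Γ).linHom (σ.linHom σ)).invariants)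
    (hcomm : ξ (Pi.single 0 1) * ξ (Pi.single 1 1) - ξ (Pi.single 1 1) * ξ (Pi.single 0 1) =
      1 + ∑ γ ∈ Finset.univ.filter (fun γ : Γ => γ ≠ 1), c γ • σ γ)
    (hschur : ∀ a ∈ (σ.linHom σ).invariants, (∀ v, ξ v * a = a * ξ v) →
      ∃ z : ℂ, a = z • (1 : Module.End ℂ Y))
    (hfi : f ∈ ((auxTau Γ).linHom (σ.linHom σ)).invariants)
    (hf : (ξ (Pi.single 0 1) * f (Pi.single 1 1) - f (Pi.single 1 1) * ξ (Pi.single 0 1)) +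
      (f (Pi.single 0 1) * ξ (Pi.single 1 1) - ξ (Pi.single 1 1) * f (Pi.single 0 1)) = 0) :
    ∃ a ∈ (σ.linHom σ).invariants, auxD ξ a = f := by
  have hdim := aux_dim Γ σ (aux_chi σ c _ _ hcomm)
  refine aux_abs _ _ (auxD ξ) (auxOm Y) auxOm_alt
    (fun f hf h => auxOm_nondeg_inv Γ σ f hf h) hdim ?_ (1 : Module.End ℂ Y) ?_ ?_ f hfi
    (fun a _ => auxOm_D ξ f a hf)
  · intro a ha γ
    refine LinearMap.ext fun v => ?_
    show σ γ * (ξ (auxTau Γ γ⁻¹ v) * a - a * ξ (auxTau Γ γ⁻¹ v)) * σ γ⁻¹ = ξ v * a - a * ξ v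
    have h1 : σ γ * ξ (auxTau Γ γ⁻¹ v) * σ γ⁻¹ = ξ v := LinearMap.congr_fun (hξ γ) v
    have h2 := aux_inv_comm σ a ha γ
    have h3 := aux_inv_comm σ a ha γ⁻¹
    rw [← h1, mul_sub, sub_mul]
    congr 1
    · simp only [mul_assoc, h3]
    · simp only [← mul_assoc, h2]
  · intro a ha hk
    refine hschur a ha fun v => ?_
    have h2 := LinearMap.congr_fun hk v
    rw [auxD_apply] at h2
    exact sub_eq_zero.mp h2
  · intro a ha b hb
    refine auxOm_D ξ (auxD ξ b) a ?_
    have hb := fun γ => aux_inv_comm σ b hb γ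
    simp only [auxD_apply]
    have hc := congrArg (fun u => u * b - b * u) hcomm
    simp only [add_mul, mul_add, one_mul, mul_one, Finset.sum_mul, Finset.mul_sum,
      smul_mul_assoc, mul_smul_comm, hb, sub_self] at hc
    rw [← hc]
    noncomm_ring

theorem aux_avg {G Y : Type} [Group G] [Fintype G] [AddCommGroup Y] [Module ℂ Y]
    (σ : Representation ℂ G Y) (d : G → Module.End ℂ Y)
    (hd : ∀ g h, d (g * h) = σ g * d h + d g * σ h) :
    ∃ ψ : Module.End ℂ Y, ∀ g, d g = σ g * ψ - ψ * σ g := by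
  have hc : (Fintype.card G : ℂ) ≠ 0 := by simp
  set S := ∑ h, d h * σ h⁻¹ with hS
  have key : ∀ g, (Fintype.card G : ℂ) • d g = S * σ g - σ g * S := by
    intro g
    have h1 : S * σ g = ∑ h, d (g * h) * σ h⁻¹ := by
      rw [hS, Finset.sum_mul, ← Equiv.sum_comp (Equiv.mulLeft g)]
      refine Finset.sum_congr rfl fun h _ => ?_
      rw [Equiv.coe_mulLeft, mul_assoc, ← map_mul]
      simp
    have h2 : ∀ h, d (g * h) * σ h⁻¹ = σ g * (d h * σ h⁻¹) + d g := by
      intro h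
      have e1 : σ h * σ h⁻¹ = 1 := by rw [← map_mul]; simp
      rw [hd, add_mul, mul_assoc, mul_assoc, e1, mul_one]
    rw [h1, Finset.sum_congr rfl fun h _ => h2 h, Finset.sum_add_distrib, ← Finset.mul_sum, ← hS]
    simp [Nat.cast_smul_eq_nsmul]
  refine ⟨-((Fintype.card G : ℂ)⁻¹ • S), fun g => ?_⟩
  have := congrArg (fun u => (Fintype.card G : ℂ)⁻¹ • u) (key g)
  simp only [smul_smul, inv_mul_cancel₀ hc, one_smul] at this
  rw [this, smul_sub, mul_neg, neg_mul, mul_smul_comm, smul_mul_assoc]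
  abel

theorem aux_der_zero (Γ : Subgroup SL2) [Fintype Γ] [DecidableEq Γ] (c : Γ → ℂ)
    {Y : Type} [AddCommGroup Y] [Module ℂ Y] (ρ : Hone Γ c →ₐ[ℂ] Module.End ℂ Y)
    (d : Hone Γ c →ₗ[ℂ] Module.End ℂ Y) (hd : ∀ a b, d (a * b) = ρ a * d b + d a * ρ b)
    (hG : ∀ γ, d (oneG Γ c γ) = 0) (hX : ∀ p, d (oneX Γ c p) = 0) (b : Hone Γ c) : d b = 0 := by
  obtain ⟨b, rfl⟩ := RingQuot.mkAlgHom_surjective ℂ (BRel Γ c) b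
  have h1 : d 1 = 0 := by
    have := hd 1 1
    simpa using this
  induction b using FreeAlgebra.induction with
  | grade0 r => rw [AlgHom.commutes, Algebra.algebraMap_eq_smul_one, map_smul, h1, smul_zero]
  | grade1 x =>
    rcases x with γ | p
    · exact hG γ
    · exact hX p
  | mul a b ha hb => rw [map_mul, hd, ha, hb, mul_zero, zero_mul, add_zero]
  | add a b ha hb => rw [map_add, map_add, ha, hb, add_zero]

/-- inner derivation -/
noncomputable def auxInn {A : Type} [Ring A] [Algebra ℂ A] {Y : Type} [AddCommGroup Y] [Module ℂ Y]
    (ρ : A →ₐ[ℂ] Module.End ℂ Y) (ψ : Module.End ℂ Y) : A →ₗ[ℂ] Module.End ℂ Y :=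
  (LinearMap.mulRight ℂ ψ - LinearMap.mulLeft ℂ ψ) ∘ₗ ρ.toLinearMap

theorem auxInn_apply {A : Type} [Ring A] [Algebra ℂ A] {Y : Type} [AddCommGroup Y] [Module ℂ Y]
    (ρ : A →ₐ[ℂ] Module.End ℂ Y) (ψ : Module.End ℂ Y) (a : A) :
    auxInn ρ ψ a = ρ a * ψ - ψ * ρ a := rfl

theorem auxInn_mul {A : Type} [Ring A] [Algebra ℂ A] {Y : Type} [AddCommGroup Y] [Module ℂ Y]
    (ρ : A →ₐ[ℂ] Module.End ℂ Y) (ψ : Module.End ℂ Y) (a b : A) :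
    auxInn ρ ψ (a * b) = ρ a * auxInn ρ ψ b + auxInn ρ ψ a * ρ b := by
  simp only [auxInn_apply, map_mul]
  noncomm_ring

/-- the linear map `L → B` -/
noncomputable def auxVec (Γ : Subgroup SL2) [Fintype Γ] [DecidableEq Γ] (c : Γ → ℂ) :
    (Fin 2 → ℂ) →ₗ[ℂ] Hone Γ c where
  toFun v := v 0 • oneX Γ c 0 + v 1 • oneX Γ c 1
  map_add' u v := by simp only [Pi.add_apply, add_smul]; abel
  map_smul' z v := by simp [mul_smul]

theorem auxVec_apply (Γ : Subgroup SL2) [Fintype Γ] [DecidableEq Γ] (c : Γ → ℂ) (v : Fin 2 → ℂ) :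
    auxVec Γ c v = v 0 • oneX Γ c 0 + v 1 • oneX Γ c 1 := rfl

theorem aux_der (Γ : Subgroup SL2) [Fintype Γ] [DecidableEq Γ] (c : Γ → ℂ)
    (Y : Type) [AddCommGroup Y] [Module ℂ Y] [FiniteDimensional ℂ Y] [Nontrivial Y]
    (ρ : Hone Γ c →ₐ[ℂ] Module.End ℂ Y)
    (hirr : ∀ U : Submodule ℂ Y, (∀ b : Hone Γ c, U.map (ρ b) ≤ U) → U = ⊥ ∨ U = ⊤)
    (d : Hone Γ c →ₗ[ℂ] Module.End ℂ Y) (hd : ∀ a b, d (a * b) = ρ a * d b + d a * ρ b) :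
    ∃ ψ : Module.End ℂ Y, ∀ b, d b = ρ b * ψ - ψ * ρ b := by
  have hmul : ∀ γ δ, oneG Γ c γ * oneG Γ c δ = oneG Γ c (γ * δ) := by
    intro γ δ
    have := RingQuot.mkAlgHom_rel ℂ (BRel.grp_mul (c := c) γ δ)
    rwa [map_mul] at this
  have hone : oneG Γ c 1 = 1 := by
    have := RingQuot.mkAlgHom_rel ℂ (BRel.grp_one (Γ := Γ) (c := c))
    rwa [map_one] at this
  have hV : ∀ v, RingQuot.mkAlgHom ℂ (BRel Γ c) (bV Γ v) = auxVec Γ c v := by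
    intro v
    rw [bV, map_add, map_smul, map_smul]; rfl
  have hconj : ∀ γ v, oneG Γ c γ * auxVec Γ c v * oneG Γ c γ⁻¹ = auxVec Γ c (auxTau Γ γ v) := by
    intro γ v
    have := RingQuot.mkAlgHom_rel ℂ (BRel.grp_conj (c := c) γ v)
    rwa [map_mul, map_mul, hV, hV] at this
  have hcomm : oneX Γ c 0 * oneX Γ c 1 - oneX Γ c 1 * oneX Γ c 0 =
      1 + ∑ γ ∈ Finset.univ.filter (fun γ : Γ => γ ≠ 1), c γ • oneG Γ c γ := by
    have := RingQuot.mkAlgHom_rel ℂ (BRel.comm (Γ := Γ) (c := c))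
    rw [map_sub, map_mul, map_mul, map_add, map_one, map_sum] at this
    simp only [map_smul] at this
    exact this
  have hv0 : auxVec Γ c (Pi.single 0 1) = oneX Γ c 0 := by
    rw [auxVec_apply]
    simp
  have hv1 : auxVec Γ c (Pi.single 1 1) = oneX Γ c 1 := by
    rw [auxVec_apply]
    simp
  let σ : Representation ℂ Γ Y :=
    { toFun := fun γ => ρ (oneG Γ c γ)
      map_one' := by rw [hone, map_one]
      map_mul' := fun a b => by rw [← hmul, map_mul] }
  have hσ : ∀ γ, σ γ = ρ (oneG Γ c γ) := fun _ => rfl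
  obtain ⟨ψ, hψ⟩ := aux_avg σ (fun γ => d (oneG Γ c γ)) (by
    intro g h
    rw [← hmul, hd]; rfl)
  obtain ⟨e, he⟩ : ∃ e : Hone Γ c →ₗ[ℂ] Module.End ℂ Y, ∀ b, e b = d b - auxInn ρ ψ b :=
    ⟨d - auxInn ρ ψ, fun _ => rfl⟩
  have hem : ∀ a b, e (a * b) = ρ a * e b + e a * ρ b := by
    intro a b
    rw [he, he, he, hd, auxInn_mul]
    noncomm_ring
  have heG : ∀ γ, e (oneG Γ c γ) = 0 := by
    intro γ
    rw [he, auxInn_apply]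
    exact sub_eq_zero.mpr (hψ γ)
  have hcancel : ∀ γ v, oneG Γ c γ * auxVec Γ c (auxTau Γ γ⁻¹ v) * oneG Γ c γ⁻¹ =
      auxVec Γ c v := by
    intro γ v
    rw [hconj]
    congr 1
    have : auxTau Γ γ * auxTau Γ γ⁻¹ = 1 := by rw [← map_mul]; simp
    exact LinearMap.congr_fun this v
  obtain ⟨a, ha, hae⟩ := aux_main Γ c σ (ρ.toLinearMap ∘ₗ auxVec Γ c) (e ∘ₗ auxVec Γ c)
    (by
      intro γ
      refine LinearMap.ext fun v => ?_
      show ρ (oneG Γ c γ) * ρ (auxVec Γ c (auxTau Γ γ⁻¹ v)) * ρ (oneG Γ c γ⁻¹) =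
        ρ (auxVec Γ c v)
      rw [← map_mul, ← map_mul, hcancel])
    (by
      show ρ (auxVec Γ c _) * ρ (auxVec Γ c _) - ρ (auxVec Γ c _) * ρ (auxVec Γ c _) = _
      rw [hv0, hv1, ← map_mul, ← map_mul, ← map_sub, hcomm, map_add, map_one, map_sum]
      simp only [map_smul]
      rfl)
    (by
      intro a ha hc
      have hz := aux_der_zero Γ c ρ (auxInn ρ a) (auxInn_mul ρ a)
        (fun γ => by
          rw [auxInn_apply]
          exact sub_eq_zero.mpr (aux_inv_comm σ a ha γ))
        (fun p => by
          rw [auxInn_apply]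
          refine sub_eq_zero.mpr ?_
          fin_cases p
          · have := hc (Pi.single 0 1)
            rw [LinearMap.comp_apply, hv0] at this
            exact this
          · have := hc (Pi.single 1 1)
            rw [LinearMap.comp_apply, hv1] at this
            exact this)
      obtain ⟨z, hz1⟩ := Module.End.exists_eigenvalue a
      refine ⟨z, ?_⟩
      rcases hirr (Module.End.eigenspace a z) (by
        intro b
        rintro _ ⟨y, hy, rfl⟩
        have h1 := hz b
        rw [auxInn_apply, sub_eq_zero] at h1
        have h2 := LinearMap.congr_fun h1 y
        have hy' : a y = z • y := Module.End.mem_eigenspace_iff.mp hy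
        refine Module.End.mem_eigenspace_iff.mpr ?_
        have h3 : a (ρ b y) = ρ b (a y) := h2.symm
        rw [h3, hy', map_smul]) with h | h
      · exact absurd h hz1
      · refine LinearMap.ext fun y => ?_
        have hy : y ∈ Module.End.eigenspace a z := by rw [h]; trivial
        exact Module.End.mem_eigenspace_iff.mp hy)
    (by
      intro γ
      refine LinearMap.ext fun v => ?_
      show ρ (oneG Γ c γ) * e (auxVec Γ c (auxTau Γ γ⁻¹ v)) * ρ (oneG Γ c γ⁻¹) =
        e (auxVec Γ c v)
      conv_rhs => rw [← hcancel γ v]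
      rw [hem, heG, hem, heG]
      simp)
    (by
      show (ρ (auxVec Γ c _) * e (auxVec Γ c _) - e (auxVec Γ c _) * ρ (auxVec Γ c _)) +
        (e (auxVec Γ c _) * ρ (auxVec Γ c _) - ρ (auxVec Γ c _) * e (auxVec Γ c _)) = 0
      rw [hv0, hv1]
      have h1 := congrArg e hcomm
      have h2 : e 1 = 0 := by rw [← hone, heG]
      rw [map_sub, hem, hem, map_add, h2, map_sum, Finset.sum_eq_zero (fun γ _ => by
        rw [map_smul, heG, smul_zero]), add_zero] at h1
      rw [← h1]
      abel)
  have hfin := aux_der_zero Γ c ρ (e - auxInn ρ a) (by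
      intro u v
      rw [LinearMap.sub_apply, LinearMap.sub_apply, LinearMap.sub_apply, hem, auxInn_mul]
      noncomm_ring)
    (fun γ => by
      rw [LinearMap.sub_apply, heG, auxInn_apply, zero_sub, neg_eq_zero]
      exact sub_eq_zero.mpr (aux_inv_comm σ a ha γ))
    (fun p => by
      rw [LinearMap.sub_apply, auxInn_apply]
      refine sub_eq_zero.mpr ?_
      fin_cases p
      · have := LinearMap.congr_fun hae (Pi.single 0 1)
        rw [auxD_apply, LinearMap.comp_apply, LinearMap.comp_apply, hv0] at this
        exact this.symm
      · have := LinearMap.congr_fun hae (Pi.single 1 1)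
        rw [auxD_apply, LinearMap.comp_apply, LinearMap.comp_apply, hv1] at this
        exact this.symm)
  refine ⟨ψ + a, fun b => ?_⟩
  have := hfin b
  rw [LinearMap.sub_apply, he, auxInn_apply, auxInn_apply, sub_sub, sub_eq_zero] at this
  rw [this, mul_add, add_mul]
  abel

/-- for `B = H_{1,c}(Γ)` and a finite dimensional irreducible `B`-module
`Y`, one has `Ext¹_B(Y, Y) = 0`, i.e. the Hochschild cohomology `H¹(B, End_ℂ Y)`
vanishes (every 1-cocycle is a coboundary), where `End_ℂ Y` is a `B`-bimodule via
`ρ : B → End_ℂ Y`. -/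
theorem stmt_14 (Γ : Subgroup SL2) [Fintype Γ] [DecidableEq Γ] (c : Γ → ℂ)
    (Y : Type) [AddCommGroup Y] [Module ℂ Y] [FiniteDimensional ℂ Y] [Nontrivial Y]
    (ρ : Hone Γ c →ₐ[ℂ] Module.End ℂ Y)
    (hirr : ∀ U : Submodule ℂ Y, (∀ b : Hone Γ c, U.map (ρ b) ≤ U) → U = ⊥ ∨ U = ⊤) :
    Zc (bimodEnd ρ) 1 ≤ Bc (bimodEnd ρ) 0 := by
  intro φ hφ
  let d : Hone Γ c →ₗ[ℂ] Module.End ℂ Y :=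
    (MultilinearMap.ofSubsingleton ℂ (Hone Γ c) (Module.End ℂ Y) (0 : Fin 1)).symm φ
  have hdφ : ∀ a : Fin 1 → Hone Γ c, φ a = d (a 0) := by
    intro a
    show φ a = φ (fun _ => a 0)
    congr 1
    ext i
    rw [Subsingleton.elim i 0]
  obtain ⟨ψ, hψ⟩ := aux_der Γ c Y ρ hirr d (by
    intro a b
    have h := hφ ![a, b]
    simp only [dF, hdφ, bimodEnd] at h
    simp at h
    rw [← sub_eq_zero, ← neg_eq_zero, ← h]
    abel)
  refine ⟨MultilinearMap.constOfIsEmpty ℂ _ ψ, fun a => ?_⟩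
  rw [hdφ, hψ]
  simp [dF, bimodEnd, sub_eq_add_neg]
end

section
/- Let A = H_{1,0,c}(Γ_N) (the parameter k equal to 0), B = H_{1,c}(Γ), Y a finite-dimensional irreducible B-module, and W a finite-dimensional irreducible representation of S_N satisfying Hom_{S_N}(𝔥 ⊗ W, W) = 0 (as holds exactly when the Young diagram of W is a rectangle), where 𝔥 is the reflection representation of S_N. Let M = W ⊗ Y^{⊗N} be the A-module described in the context. Then the Hochschild cohomology H¹(A, End_ℂ M) vanishes; equivalently Ext¹_A(M, M) = 0. -/
open scoped TensorProduct

noncomputable section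

/-- The permutation action of `S_N` on `Γ^N`, `(σ • f) i = f (σ⁻¹ i)`. -/
def wphi (Γ : Type) [Group Γ] (N : ℕ) : Equiv.Perm (Fin N) →* MulAut (Fin N → Γ) where
  toFun σ := MulEquiv.arrowCongr σ (MulEquiv.refl Γ)
  map_one' := rfl
  map_mul' _ _ := rfl

/-- The wreath product `Γ_N = S_N ⋉ Γ^N`. -/
abbrev WP (Γ : Type) [Group Γ] (N : ℕ) : Type :=
  (Fin N → Γ) ⋊[wphi Γ N] Equiv.Perm (Fin N)

/-- `γ_i`: the element `γ ∈ Γ` placed in the `i`-th factor of `Γ^N ⊂ Γ_N`. -/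
def tG {Γ : Type} [Group Γ] {N : ℕ} (i : Fin N) (γ : Γ) : WP Γ N :=
  SemidirectProduct.inl (Pi.mulSingle i γ)

/-- The symplectic reflection `s_{ij} γ_i γ_j⁻¹` of type (S). -/
def tS {Γ : Type} [Group Γ] {N : ℕ} (i j : Fin N) (γ : Γ) : WP Γ N :=
  SemidirectProduct.inr (Equiv.swap i j) * tG i γ * (tG j γ)⁻¹

/-- The linear action of the wreath product `Γ_N` (for `Γ ⊂ SL(2,ℂ)`) on `V = L^{⊕N}`,
`(g · v) i = g.left i • v (g.right⁻¹ i)`. -/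
def actL (Γ : Subgroup SL2) (N : ℕ) (g : WP Γ N) :
    (Fin N → Fin 2 → ℂ) →ₗ[ℂ] Fin N → Fin 2 → ℂ :=
  LinearMap.pi fun i =>
    (Matrix.mulVecLin ((g.left i : SL2) : Matrix (Fin 2) (Fin 2) ℂ)).comp
      (LinearMap.proj (g.right⁻¹ i))

section HNalg

variable (Γ : Subgroup SL2) [Fintype Γ] [DecidableEq Γ] (N : ℕ)

/-- Generator `g ∈ Γ_N` in the free algebra on `Γ_N ⊕ {x_i, y_i}`. -/
def nG (g : WP Γ N) : FreeAlgebra ℂ (WP Γ N ⊕ Fin N × Fin 2) :=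
  FreeAlgebra.ι ℂ (Sum.inl g)

/-- Generator `x_i` (for `p = 0`) resp. `y_i` (for `p = 1`) in the free algebra. -/
def nX (i : Fin N) (p : Fin 2) : FreeAlgebra ℂ (WP Γ N ⊕ Fin N × Fin 2) :=
  FreeAlgebra.ι ℂ (Sum.inr (i, p))

/-- The general vector `v ∈ V = L^{⊕N}` inside the free algebra. -/
def nV (v : Fin N → Fin 2 → ℂ) : FreeAlgebra ℂ (WP Γ N ⊕ Fin N × Fin 2) :=
  ∑ i : Fin N, ∑ p : Fin 2, v i p • nX Γ N i p

/-- The standard symplectic form `ω_L` on `L = ℂ²`: `ω_L(u,v) = u₀ v₁ - u₁ v₀`. -/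
def omL (u v : Fin 2 → ℂ) : ℂ := u 0 * v 1 - u 1 * v 0

/-- The defining relations of the wreath product symplectic reflection algebra
`H_{1,k,c}(Γ_N)`:  the group relations of `Γ_N`, the relations `g v g⁻¹ = g(v)` for
`v ∈ V`, and the relations (R1), (R2) of Gan–Ginzburg. -/
inductive HRel (k : ℂ) (c : Γ → ℂ) :
    FreeAlgebra ℂ (WP Γ N ⊕ Fin N × Fin 2) → FreeAlgebra ℂ (WP Γ N ⊕ Fin N × Fin 2) → Prop
  | grp_mul (g h : WP Γ N) : HRel k c (nG Γ N g * nG Γ N h) (nG Γ N (g * h))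
  | grp_one : HRel k c (nG Γ N 1) 1
  | grp_conj (g : WP Γ N) (v : Fin N → Fin 2 → ℂ) :
      HRel k c (nG Γ N g * nV Γ N v * nG Γ N g⁻¹) (nV Γ N (actL Γ N g v))
  | r1 (i : Fin N) :
      HRel k c (nX Γ N i 0 * nX Γ N i 1 - nX Γ N i 1 * nX Γ N i 0)
        (1 + (k / 2) • ∑ j ∈ Finset.univ.filter (fun j : Fin N => j ≠ i),
            ∑ γ : Γ, nG Γ N (tS i j γ)
          + ∑ γ ∈ Finset.univ.filter (fun γ : Γ => γ ≠ 1), c γ • nG Γ N (tG i γ))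
  | r2 (i j : Fin N) (hij : i ≠ j) (u v : Fin 2 → ℂ) :
      HRel k c (nV Γ N (Pi.single i u) * nV Γ N (Pi.single j v)
          - nV Γ N (Pi.single j v) * nV Γ N (Pi.single i u))
        ((-(k / 2)) • ∑ γ : Γ,
          omL (Matrix.mulVec ((γ : SL2) : Matrix (Fin 2) (Fin 2) ℂ) u) v • nG Γ N (tS i j γ))

/-- The wreath product symplectic reflection algebra `H_{1,k,c}(Γ_N)`. -/
abbrev HN (k : ℂ) (c : Γ → ℂ) : Type := RingQuot (HRel Γ N k c)

/-- The image of the group element `g ∈ Γ_N` in `H_{1,k,c}(Γ_N)`. -/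
def hG (k : ℂ) (c : Γ → ℂ) (g : WP Γ N) : HN Γ N k c :=
  RingQuot.mkAlgHom ℂ (HRel Γ N k c) (nG Γ N g)

/-- The image of `x_i` (`p = 0`) resp. `y_i` (`p = 1`) in `H_{1,k,c}(Γ_N)`. -/
def hX (k : ℂ) (c : Γ → ℂ) (i : Fin N) (p : Fin 2) : HN Γ N k c :=
  RingQuot.mkAlgHom ℂ (HRel Γ N k c) (nX Γ N i p)
end HNalg


variable {A : Type} [Ring A] [Algebra ℂ A] {E : Type} [AddCommGroup E] [Module ℂ E]

/-- The sum-of-coordinates functional on `ℂ^N`. -/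
def sumFun (N : ℕ) : (Fin N → ℂ) →ₗ[ℂ] ℂ where
  toFun v := ∑ i, v i
  map_add' u v := by simp [Finset.sum_add_distrib]
  map_smul' z v := by simp [Finset.mul_sum]

/-- The reflection representation `𝔥 = {v ∈ ℂ^N : ∑ vᵢ = 0}` of `S_N`. -/
def hplane (N : ℕ) : Submodule ℂ (Fin N → ℂ) := LinearMap.ker (sumFun N)

/-- The permutation action of `S_N` on `𝔥`. -/
def permH {N : ℕ} (σ : Equiv.Perm (Fin N)) (v : hplane N) : hplane N :=
  ⟨fun i => (v : Fin N → ℂ) (σ⁻¹ i), by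
    have hv : sumFun N (v : Fin N → ℂ) = 0 := v.2
    simp only [sumFun, LinearMap.coe_mk, AddHom.coe_mk] at hv
    simp only [hplane, LinearMap.mem_ker, sumFun, LinearMap.coe_mk, AddHom.coe_mk]
    rw [Equiv.sum_comp σ⁻¹ (v : Fin N → ℂ)]
    exact hv⟩
end

open scoped TensorProduct

lemma exists_eigenbasis {V : Type} [AddCommGroup V] [Module ℂ V] [FiniteDimensional ℂ V]
    (f : Module.End ℂ V) (n : ℕ) (hn : n ≠ 0) (hf : f ^ n = 1) :
    ∃ (ι : Type) (_ : Fintype ι) (_ : DecidableEq ι) (b : Module.Basis ι ℂ V) (μ : ι → ℂ),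
      (∀ i, f (b i) = μ i • b i) ∧ ∀ i, μ i ^ n = 1 := by
  classical
  have hss : f.IsSemisimple := by
    refine Module.End.isSemisimple_of_squarefree_aeval_eq_zero
      (p := Polynomial.X ^ n - Polynomial.C 1) ?_ ?_
    · exact (Polynomial.separable_X_pow_sub_C (1 : ℂ) (by exact_mod_cast hn) one_ne_zero).squarefree
    · simp [hf]
  have htop := hss.iSup_eigenspace_eq_top
  let s : Set V := {v | ∃ μ : ℂ, f v = μ • v}
  have hs : ⊤ ≤ Submodule.span ℂ s := by
    rw [← htop]
    refine iSup_le fun μ v hv => Submodule.subset_span ⟨μ, ?_⟩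
    exact Module.End.mem_eigenspace_iff.mp hv
  let b := Module.Basis.ofSpan hs
  have hb : ∀ i, ∃ μ : ℂ, f (b i) = μ • b i := fun i => Module.Basis.ofSpan_subset hs ⟨i, rfl⟩
  choose μ hμ using hb
  have : Fintype _ := FiniteDimensional.fintypeBasisIndex b
  refine ⟨_, this, inferInstance, b, μ, hμ, fun i => ?_⟩
  have h1 : ∀ m : ℕ, (f ^ m) (b i) = μ i ^ m • b i := by
    intro m
    induction m with
    | zero => simp
    | succ m ih => rw [pow_succ', Module.End.mul_apply, ih, map_smul, hμ, smul_smul, pow_succ]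
  have h2 := h1 n
  rw [hf, Module.End.one_apply] at h2
  have h3 : (μ i ^ n - 1) • b i = 0 := by rw [sub_smul, ← h2]; simp
  rcases smul_eq_zero.mp h3 with h | h
  · exact sub_eq_zero.mp h
  · exact absurd h (b.ne_zero i)

lemma trace_eigenbasis {V : Type} [AddCommGroup V] [Module ℂ V] 
    {ι : Type} [Fintype ι] [DecidableEq ι] (b : Module.Basis ι ℂ V) (f : Module.End ℂ V)
    (μ : ι → ℂ) (h : ∀ i, f (b i) = μ i • b i) : LinearMap.trace ℂ V f = ∑ i, μ i := by
  rw [LinearMap.trace_eq_matrix_trace ℂ b, Matrix.trace]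
  simp [LinearMap.toMatrix_apply, h]

lemma char_facts {G V : Type} [Group G] [Finite G] [AddCommGroup V] [Module ℂ V]
    [FiniteDimensional ℂ V] (ρ : Representation ℂ G V) (g : G) :
    ρ.character g⁻¹ = star (ρ.character g) ∧ (ρ.character g).re ≤ Module.finrank ℂ V ∧
    ((ρ.character g).re = Module.finrank ℂ V → ρ g = 1) := by
  have hn : orderOf g ≠ 0 := (orderOf_pos g).ne'
  obtain ⟨ι, _, _, b, μ, h1, h2⟩ := exists_eigenbasis (ρ g) (orderOf g) hn
    (by rw [← map_pow, pow_orderOf_eq_one, map_one])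
  have hnorm : ∀ i, ‖μ i‖ = 1 := fun i => Complex.norm_eq_one_of_pow_eq_one (h2 i) hn
  have hne : ∀ i, μ i ≠ 0 := fun i h => by have := hnorm i; simp [h] at this
  have hinv : ∀ i, ρ g⁻¹ (b i) = (μ i)⁻¹ • b i := by
    intro i
    have : ρ g⁻¹ (ρ g (b i)) = b i := by
      rw [← Module.End.mul_apply, ← map_mul]; simp
    rw [h1, map_smul] at this
    rw [← this, smul_smul, inv_mul_cancel₀ (hne i), one_smul, this]
  have hc : ρ.character g = ∑ i, μ i := trace_eigenbasis b _ _ h1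
  have hci : ρ.character g⁻¹ = ∑ i, (μ i)⁻¹ := trace_eigenbasis b _ _ hinv
  have hle : ∀ i, (μ i).re ≤ 1 := fun i => (Complex.re_le_norm _).trans (hnorm i).le
  have hfr : (Module.finrank ℂ V : ℝ) = ∑ i : ι, (1 : ℝ) := by
    rw [Module.finrank_eq_card_basis b]; simp
  refine ⟨?_, ?_, ?_⟩
  · rw [hc, hci, star_sum]
    refine Finset.sum_congr rfl fun i _ => ?_
    rw [Complex.inv_eq_conj (hnorm i)]; rfl
  · rw [hc, Complex.re_sum, hfr]
    exact Finset.sum_le_sum fun i _ => hle i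
  · intro h
    rw [hc, Complex.re_sum, hfr] at h
    have h3 := (Finset.sum_eq_sum_iff_of_le (fun i _ => hle i)).mp h
    have h4 : ∀ i, μ i = 1 := by
      intro i
      have hr := h3 i (Finset.mem_univ i)
      have hn := hnorm i
      have h5 := Complex.sq_norm_sub_sq_re (μ i)
      rw [hn, hr] at h5
      apply Complex.ext
      · simpa using hr
      · simp at h5 ⊢
        exact (pow_eq_zero_iff two_ne_zero).mp h5.symm
    refine b.ext fun i => ?_
    rw [h1, h4]; simp

lemma symp_lemma {P : Type} [AddCommGroup P] [Module ℂ P] [FiniteDimensional ℂ P]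
    (ω : LinearMap.BilinForm ℂ P) (hω : ∀ x, ω x x = 0) (hnd : ∀ x, (∀ y, ω x y = 0) → x = 0)
    (Bd : Submodule ℂ P) (hiso : ∀ x ∈ Bd, ∀ y ∈ Bd, ω x y = 0)
    (hdim : Module.finrank ℂ P < 2 * Module.finrank ℂ Bd + 2) (z : P)
    (hz : ∀ b ∈ Bd, ω b z = 0) : z ∈ Bd := by
  have halt : ω.IsAlt := hω
  have hnd' : ω.Nondegenerate := by
    refine ⟨hnd, fun y hy => hnd y fun x => ?_⟩
    rw [← halt.neg_eq, hy, neg_zero]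
  have heven : Even (Module.finrank ℂ P) := by
    let b := Module.finBasis ℂ P
    let A := LinearMap.BilinForm.toMatrix b ω
    have hdet : A.det ≠ 0 := (LinearMap.BilinForm.nondegenerate_iff_det_ne_zero b).mp hnd'
    have hT : A.transpose = - A := by
      ext i j
      simp [A, LinearMap.BilinForm.toMatrix_apply, halt.neg_eq]
    have h1 : A.det = (-1) ^ (Module.finrank ℂ P) * A.det := by
      conv_lhs => rw [← Matrix.det_transpose, hT, Matrix.det_neg]
      simp
    by_contra hodd
    rw [Nat.not_even_iff_odd] at hodd
    rw [hodd.neg_one_pow] at h1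
    apply hdet
    linear_combination h1 / 2
  have hle : Bd ≤ ω.orthogonal Bd := fun y hy x hx => hiso x hx y hy
  have hfo := LinearMap.BilinForm.finrank_orthogonal hnd' Bd
  have heq : Bd = ω.orthogonal Bd := by
    apply Submodule.eq_of_le_of_finrank_le hle
    rw [hfo]
    obtain ⟨k, hk⟩ := heven
    omega
  rw [heq]
  exact fun b hb => hz b hb

lemma burnside_surj {A Y : Type} [Ring A] [Algebra ℂ A] [AddCommGroup Y] [Module ℂ Y]
    [FiniteDimensional ℂ Y] [Nontrivial Y] (ρ : A →ₐ[ℂ] Module.End ℂ Y)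
    (hirr : ∀ U : Submodule ℂ Y, (∀ b : A, U.map (ρ b) ≤ U) → U = ⊥ ∨ U = ⊤) :
    Function.Surjective ρ := by
  classical
  let _ : Module A Y := Module.compHom Y (ρ : A →+* Module.End ℂ Y)
  have hsm : ∀ (a : A) (y : Y), a • y = ρ a y := fun _ _ => rfl
  have : IsScalarTower ℂ A Y := ⟨fun z a y => by simp [hsm]⟩
  have : IsSimpleModule A Y := by
    rw [isSimpleModule_iff]
    refine ⟨fun U => ?_⟩
    have := hirr (U.restrictScalars ℂ) (by
      rintro b _ ⟨y, hy, rfl⟩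
      exact U.smul_mem b hy)
    rcases this with h | h
    · left; simpa using h
    · right; simpa using h
  intro f
  have hs := (IsSimpleModule.algebraMap_end_bijective_of_isAlgClosed (A := A) (V := Y) ℂ).2
  let f' : Module.End (Module.End A Y) Y :=
    { toFun := f
      map_add' := map_add f
      map_smul' := by
        intro e y
        obtain ⟨z, rfl⟩ := hs e
        have : ∀ y : Y, (algebraMap ℂ (Module.End A Y) z) • y = z • y := fun y => rfl
        simp [this] }
  obtain ⟨r, hr⟩ := jacobson_density (R := A) f' (Finset.univ.image (Module.finBasis ℂ Y))
  refine ⟨r, (Module.finBasis ℂ Y).ext fun i => ?_⟩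
  exact (hr _ (Finset.mem_image_of_mem _ (Finset.mem_univ i))).symm

lemma schur_scalar {A Y : Type} [Ring A] [Algebra ℂ A] [AddCommGroup Y] [Module ℂ Y]
    (ρ : A →ₐ[ℂ] Module.End ℂ Y) (hs : Function.Surjective ρ) (m : Module.End ℂ Y)
    (hm : ∀ a, ρ a * m = m * ρ a) : ∃ z : ℂ, m = z • 1 := by
  have : m ∈ Subalgebra.center ℂ (Module.End ℂ Y) := by
    rw [Subalgebra.mem_center_iff]
    intro b
    obtain ⟨a, rfl⟩ := hs b
    exact hm a
  rw [Algebra.IsCentral.center_eq_bot] at this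
  obtain ⟨z, hz⟩ := Algebra.mem_bot.mp this
  exact ⟨z, by rw [← hz, Algebra.algebraMap_eq_smul_one]⟩

lemma trace_nondeg {Y : Type} [AddCommGroup Y] [Module ℂ Y] [FiniteDimensional ℂ Y]
    (a : Module.End ℂ Y) (h : ∀ T, LinearMap.trace ℂ Y (a * T) = 0) : a = 0 := by
  refine LinearMap.ext fun y => ?_
  rw [LinearMap.zero_apply, ← Module.forall_dual_apply_eq_zero_iff ℂ]
  intro ξ
  have h1 := h (ξ.smulRight y)
  have h2 : a * ξ.smulRight y = ξ.smulRight (a y) := by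
    ext v; simp
  rwa [h2, LinearMap.trace_smulRight] at h1

open scoped TensorProduct

noncomputable section
namespace S19
abbrev LL : Type := Fin 2 → ℂ
abbrev e0 : LL := Pi.single 0 1
abbrev e1 : LL := Pi.single 1 1

def rL {G : Type} [Group G] (μ : G →* Matrix.SpecialLinearGroup (Fin 2) ℂ) :
    Representation ℂ G LL where
  toFun g := Matrix.mulVecLin ((μ g : Matrix.SpecialLinearGroup (Fin 2) ℂ) : Matrix (Fin 2) (Fin 2) ℂ)
  map_one' := by ext; simp
  map_mul' g h := by
    rw [map_mul, Matrix.SpecialLinearGroup.coe_mul, Matrix.mulVecLin_mul]; rfl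

lemma LL_eq (v : LL) : v = v 0 • e0 + v 1 • e1 := by
  ext i; fin_cases i <;> simp

section
variable {Y : Type} [AddCommGroup Y] [Module ℂ Y]

/-- symplectic form -/
def om (Y : Type) [AddCommGroup Y] [Module ℂ Y] :
    LinearMap.BilinForm ℂ (LL →ₗ[ℂ] Module.End ℂ Y) :=
  LinearMap.mk₂ ℂ (fun φ ψ => LinearMap.trace ℂ Y (φ e0 * ψ e1 - φ e1 * ψ e0))
    (by intros; simp [add_mul]; ring) (by intros; simp; ring)
    (by intros; simp [mul_add]; ring) (by intros; simp; ring)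

lemma om_apply (φ ψ : LL →ₗ[ℂ] Module.End ℂ Y) :
    om Y φ ψ = LinearMap.trace ℂ Y (φ e0 * ψ e1 - φ e1 * ψ e0) := rfl

lemma om_self (φ : LL →ₗ[ℂ] Module.End ℂ Y) : om Y φ φ = 0 := by
  rw [om_apply, map_sub, LinearMap.trace_mul_comm, sub_self]

variable {G : Type} [Group G] (μ : G →* Matrix.SpecialLinearGroup (Fin 2) ℂ)
  (g : Representation ℂ G Y)

abbrev rF : Representation ℂ G (LL →ₗ[ℂ] Module.End ℂ Y) :=
  (rL μ).linHom (g.linHom g)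

lemma rF_apply (γ : G) (φ : LL →ₗ[ℂ] Module.End ℂ Y) (v : LL) :
    rF μ g γ φ v = g γ * φ (rL μ γ⁻¹ v) * g γ⁻¹ := rfl

lemma trace_conj (γ : G) (a : Module.End ℂ Y) :
    LinearMap.trace ℂ Y (g γ * a * g γ⁻¹) = LinearMap.trace ℂ Y a := by
  rw [LinearMap.trace_mul_comm, ← mul_assoc, ← map_mul]; simp

lemma conj_mul_conj (γ : G) (a b : Module.End ℂ Y) :
    (g γ * a * g γ⁻¹) * (g γ * b * g γ⁻¹) = g γ * (a * b) * g γ⁻¹ := by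
  have : g γ⁻¹ * g γ = 1 := by rw [← map_mul]; simp
  calc _ = g γ * a * (g γ⁻¹ * g γ) * b * g γ⁻¹ := by simp only [mul_assoc]
    _ = _ := by rw [this]; simp only [mul_assoc, mul_one, one_mul]

lemma om_inv (γ : G) (φ ψ : LL →ₗ[ℂ] Module.End ℂ Y) :
    om Y (rF μ g γ φ) (rF μ g γ ψ) = om Y φ ψ := by
  rw [om_apply, om_apply]
  simp only [rF_apply, conj_mul_conj, map_sub, trace_conj]
  have hdet := (μ γ⁻¹).det_coe
  rw [Matrix.det_fin_two] at hdet
  rw [LL_eq (rL μ γ⁻¹ e0), LL_eq (rL μ γ⁻¹ e1)]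
  simp only [rL, MonoidHom.coe_mk, OneHom.coe_mk, Matrix.mulVecLin_apply, map_add, map_smul,
    Matrix.mulVec_single_one, Matrix.col_apply, add_mul, mul_add, smul_mul_assoc, mul_smul_comm,
    smul_eq_mul]
  set a := ((μ γ⁻¹) : Matrix (Fin 2) (Fin 2) ℂ) 0 0
  set b := ((μ γ⁻¹) : Matrix (Fin 2) (Fin 2) ℂ) 0 1
  set c := ((μ γ⁻¹) : Matrix (Fin 2) (Fin 2) ℂ) 1 0
  set d := ((μ γ⁻¹) : Matrix (Fin 2) (Fin 2) ℂ) 1 1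
  linear_combination (LinearMap.trace ℂ Y (φ e0 * ψ e1) - LinearMap.trace ℂ Y (φ e1 * ψ e0)) * hdet

lemma om_nondeg [Fintype G] [FiniteDimensional ℂ Y] (φ : LL →ₗ[ℂ] Module.End ℂ Y)
    (hφ : φ ∈ (rF μ g).invariants) (h : ∀ ψ ∈ (rF μ g).invariants, om Y φ ψ = 0) : φ = 0 := by
  have h1 : ∀ ψ, om Y φ ψ = 0 := by
    intro ψ
    have h2 := h (∑ γ, rF μ g γ ψ) (by
      intro δ
      rw [map_sum]
      simp_rw [← Module.End.mul_apply, ← map_mul]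
      exact Fintype.sum_equiv (Equiv.mulLeft δ) _ _ fun _ => rfl)
    rw [map_sum] at h2
    have h3 : ∀ γ, om Y φ (rF μ g γ ψ) = om Y φ ψ := by
      intro γ
      conv_lhs => rw [← hφ γ]
      exact om_inv μ g γ φ ψ
    simp only [h3, Finset.sum_const, Finset.card_univ, nsmul_eq_mul] at h2
    rcases mul_eq_zero.mp h2 with h4 | h4
    · exact absurd h4 (by exact_mod_cast Fintype.card_ne_zero)
    · exact h4
  have ha : φ e0 = 0 := trace_nondeg _ fun T => by
    have := h1 ((LinearMap.proj 1 : LL →ₗ[ℂ] ℂ).smulRight T)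
    rw [om_apply] at this
    simpa using this
  have hb : φ e1 = 0 := trace_nondeg _ fun T => by
    have := h1 ((LinearMap.proj 0 : LL →ₗ[ℂ] ℂ).smulRight T)
    rw [om_apply] at this
    simpa using this
  ext1 i
  refine LinearMap.ext fun z => ?_
  fin_cases i
  · have : φ (Pi.single 0 z) = z • φ e0 := by rw [← map_smul]; congr 1; ext i; simp [Pi.single_apply]
    simp [this, ha]
  · have : φ (Pi.single 1 z) = z • φ e1 := by rw [← map_smul]; congr 1; ext i; simp [Pi.single_apply]
    simp [this, hb]

lemma dim_lt [Fintype G] [FiniteDimensional ℂ Y] (hμ : Function.Injective μ)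
    (hex : ∃ γ : G, γ ≠ 1 ∧ g.character γ ≠ 0) :
    Module.finrank ℂ (rF μ g).invariants < 2 * Module.finrank ℂ (g.linHom g).invariants := by
  have hne : (Nat.card G : ℂ) ≠ 0 := by exact_mod_cast Nat.card_pos.ne'
  have : Invertible (Nat.card G : ℂ) := invertibleOfNonzero hne
  have hE := Representation.card_inv_mul_sum_char_eq_finrank (g.linHom g)
  have hP := Representation.card_inv_mul_sum_char_eq_finrank (rF μ g)
  simp only [Representation.char_linHom] at hE hP
  have hdiff : (Nat.card G : ℂ)⁻¹ * ∑ γ : G, (2 - (rL μ).character γ⁻¹) *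
      (g.character γ⁻¹ * g.character γ) = 2 * (Module.finrank ℂ (g.linHom g).invariants : ℂ) -
        Module.finrank ℂ (rF μ g).invariants := by
    rw [← hE, ← hP]
    simp only [sub_mul, Finset.sum_sub_distrib, ← Finset.mul_sum]
    ring
  have hdiff2 := congrArg Complex.re hdiff
  have hcast : (2 * (Module.finrank ℂ (g.linHom g).invariants : ℂ) -
        Module.finrank ℂ (rF μ g).invariants).re =
      2 * (Module.finrank ℂ (g.linHom g).invariants : ℝ) - Module.finrank ℂ (rF μ g).invariants := by
    simp
  have hterm : ∀ γ : G, ((2 - (rL μ).character γ⁻¹) * (g.character γ⁻¹ * g.character γ)).re =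
      (2 - ((rL μ).character γ⁻¹).re) * Complex.normSq (g.character γ) := by
    intro γ
    have : g.character γ⁻¹ * g.character γ = (Complex.normSq (g.character γ) : ℂ) := by
      rw [(char_facts g γ).1, Complex.normSq_eq_conj_mul_self]; rfl
    rw [this, Complex.re_mul_ofReal]; simp
  rw [hcast, show (Nat.card G : ℂ)⁻¹ = (((Nat.card G : ℝ)⁻¹ : ℝ) : ℂ) by push_cast; rfl,
    Complex.re_ofReal_mul, Complex.re_sum] at hdiff2
  simp only [hterm] at hdiff2
  have hfr : (Module.finrank ℂ LL : ℝ) = 2 := by simp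
  have hnonneg : ∀ γ : G, 0 ≤ 2 - ((rL μ).character γ⁻¹).re := by
    intro γ
    have := (char_facts (rL μ) γ⁻¹).2.1
    rw [hfr] at this; linarith
  have hpos : 0 < ∑ γ : G, (2 - ((rL μ).character γ⁻¹).re) * Complex.normSq (g.character γ) := by
    obtain ⟨γ, hγ1, hγ2⟩ := hex
    refine Finset.sum_pos' (fun γ _ => mul_nonneg (hnonneg γ) (Complex.normSq_nonneg _))
      ⟨γ, Finset.mem_univ _, mul_pos ?_ (Complex.normSq_pos.mpr hγ2)⟩
    refine lt_of_le_of_ne (hnonneg γ) fun h => ?_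
    have h1 := (char_facts (rL μ) γ⁻¹).2.2 (by rw [hfr]; linarith)
    apply hγ1
    rw [← inv_eq_one, ← hμ.eq_iff, map_one]
    ext i j
    have h2 := congrFun (congrArg (fun f : Module.End ℂ LL => f (Pi.single j 1)) h1) i
    simp only [rL, MonoidHom.coe_mk, OneHom.coe_mk, Matrix.mulVecLin_apply,
      Matrix.mulVec_single_one, Matrix.col_apply, Module.End.one_apply] at h2
    rw [h2, Matrix.SpecialLinearGroup.coe_one, Matrix.one_apply, Pi.single_apply]
  have hc : 0 < (Nat.card G : ℝ)⁻¹ := by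
    have : 0 < Nat.card G := Nat.card_pos
    positivity
  have hfin := mul_pos hc hpos
  rw [hdiff2] at hfin
  have : (Module.finrank ℂ (rF μ g).invariants : ℝ) <
    2 * (Module.finrank ℂ (g.linHom g).invariants : ℝ) := by linarith
  exact_mod_cast this

end
end S19
end

open scoped TensorProduct

noncomputable section
namespace S19
section
variable {Y : Type} [AddCommGroup Y] [Module ℂ Y]

def dl (X : LL →ₗ[ℂ] Module.End ℂ Y) :
    Module.End ℂ Y →ₗ[ℂ] (LL →ₗ[ℂ] Module.End ℂ Y) :=
  LinearMap.mk₂ ℂ (fun m v => X v * m - m * X v)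
    (by intros; simp only [mul_add, add_mul]; abel) (by intros; simp [smul_sub])
    (by intros; simp only [map_add, mul_add, add_mul]; abel) (by intros; simp [smul_sub])

lemma dl_apply (X : LL →ₗ[ℂ] Module.End ℂ Y) (m : Module.End ℂ Y) (v : LL) :
    dl X m v = X v * m - m * X v := rfl

lemma om_dl (X φ : LL →ₗ[ℂ] Module.End ℂ Y) (m : Module.End ℂ Y) :
    om Y (dl X m) φ = - LinearMap.trace ℂ Y (m * ((φ e0 * X e1 - X e1 * φ e0) +
      (X e0 * φ e1 - φ e1 * X e0))) := by
  rw [om_apply, dl_apply, dl_apply]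
  simp only [sub_mul, mul_add, mul_sub, map_sub, map_add]
  have h1 : ∀ a b c : Module.End ℂ Y, LinearMap.trace ℂ Y (a * b * c) =
      LinearMap.trace ℂ Y (b * (c * a)) := by
    intro a b c
    rw [mul_assoc, LinearMap.trace_mul_comm, mul_assoc]
  rw [h1 (X e0) m, h1 (X e1) m, mul_assoc m, mul_assoc m]
  ring

lemma conj_iff {G : Type} [Group G] (g : Representation ℂ G Y) (γ : G) (a b : Module.End ℂ Y) :
    g γ * a * g γ⁻¹ = b ↔ g γ * a = b * g γ := by
  have h1 : g γ⁻¹ * g γ = 1 := by rw [← map_mul]; simp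
  have h2 : g γ * g γ⁻¹ = 1 := by rw [← map_mul]; simp
  constructor
  · rintro rfl
    rw [mul_assoc _ (g γ⁻¹), h1, mul_one]
  · intro h
    rw [h, mul_assoc, h2, mul_one]

lemma symp_lemma2 {E P : Type} [AddCommGroup E] [Module ℂ E] [FiniteDimensional ℂ E]
    [AddCommGroup P] [Module ℂ P] [FiniteDimensional ℂ P]
    (ω : LinearMap.BilinForm ℂ P) (hω : ∀ x, ω x x = 0) (hnd : ∀ x, (∀ y, ω x y = 0) → x = 0)
    (δ : E →ₗ[ℂ] P) (hiso : ∀ m m', ω (δ m) (δ m') = 0) (u : E) (hu : δ u = 0)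
    (hker : ∀ m, δ m = 0 → ∃ z : ℂ, z • u = m)
    (hdim : Module.finrank ℂ P < 2 * Module.finrank ℂ E) (z : P)
    (hz : ∀ m, ω (δ m) z = 0) : ∃ m, δ m = z := by
  have hker : Module.finrank ℂ (LinearMap.ker δ) ≤ 1 := by
    refine finrank_le_one ⟨u, hu⟩ ?_
    rintro ⟨m, hk⟩
    obtain ⟨z, hz⟩ := hker m hk
    exact ⟨z, Subtype.ext hz⟩
  have hrn := LinearMap.finrank_range_add_finrank_ker δ
  have := symp_lemma ω hω hnd (LinearMap.range δ) (by
    rintro _ ⟨m, rfl⟩ _ ⟨m', rfl⟩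
    exact hiso m m') (by omega) z (by
    rintro _ ⟨m, rfl⟩
    exact hz m)
  exact this

lemma rank_one_H1 {G : Type} [Group G] [Fintype G] [DecidableEq G] [FiniteDimensional ℂ Y]
    [Nontrivial Y]
    (μ : G →* Matrix.SpecialLinearGroup (Fin 2) ℂ) (hμ : Function.Injective μ)
    (g : Representation ℂ G Y) (c : G → ℂ) (X : LL →ₗ[ℂ] Module.End ℂ Y)
    (hX : ∀ γ v, g γ * X v * g γ⁻¹ = X (rL μ γ v))
    (hcomm : X e0 * X e1 - X e1 * X e0 =
      1 + ∑ γ ∈ Finset.univ.filter (fun γ : G => γ ≠ 1), c γ • g γ)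
    (hschur : ∀ m : Module.End ℂ Y, (∀ γ, g γ * m = m * g γ) → (∀ v, X v * m = m * X v) →
      ∃ z : ℂ, m = z • 1)
    (φ : LL →ₗ[ℂ] Module.End ℂ Y) (hφ : ∀ γ v, g γ * φ v * g γ⁻¹ = φ (rL μ γ v))
    (hφ2 : (φ e0 * X e1 - X e1 * φ e0) + (X e0 * φ e1 - φ e1 * X e0) = 0) :
    ∃ m : Module.End ℂ Y, (∀ γ, g γ * m = m * g γ) ∧ ∀ v, φ v = X v * m - m * X v := by
  have hinv : ∀ ψ : LL →ₗ[ℂ] Module.End ℂ Y, (∀ γ v, g γ * ψ v * g γ⁻¹ = ψ (rL μ γ v)) →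
      ψ ∈ (rF μ g).invariants := by
    intro ψ hψ γ
    refine LinearMap.ext fun v => ?_
    rw [rF_apply, hψ, ← Module.End.mul_apply, ← map_mul]; simp
  have hE : ∀ m ∈ (g.linHom g).invariants, ∀ γ, g γ * m = m * g γ := by
    intro m hm γ
    rw [← conj_iff]
    exact hm γ
  have hdl : ∀ m ∈ (g.linHom g).invariants, dl X m ∈ (rF μ g).invariants := by
    intro m hm
    apply hinv
    intro γ v
    have h1 := (conj_iff g γ m m).mpr (hE m hm γ)
    rw [dl_apply, dl_apply, ← hX, mul_sub, sub_mul, ← conj_mul_conj, ← conj_mul_conj, h1]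
  have hcommE : ∀ m ∈ (g.linHom g).invariants,
      (X e0 * X e1 - X e1 * X e0) * m = m * (X e0 * X e1 - X e1 * X e0) := by
    intro m hm
    rw [hcomm, add_mul, mul_add, Finset.sum_mul, Finset.mul_sum, one_mul, mul_one]
    congr 1
    refine Finset.sum_congr rfl fun γ _ => ?_
    rw [smul_mul_assoc, mul_smul_comm, hE m hm]
  have h1 : (1 : Module.End ℂ Y) ∈ (g.linHom g).invariants := by
    intro γ
    show g γ * 1 * g γ⁻¹ = 1
    rw [mul_one, ← map_mul]; simp
  have hk1 : dl X 1 = 0 := by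
    refine LinearMap.ext fun v => ?_
    rw [dl_apply]; simp
  have hex : ∃ γ : G, γ ≠ 1 ∧ g.character γ ≠ 0 := by
    by_contra hcon
    push Not at hcon
    have h1 := congrArg (LinearMap.trace ℂ Y) hcomm
    rw [map_sub, LinearMap.trace_mul_comm, sub_self, map_add, map_sum,
      LinearMap.trace_one, Finset.sum_eq_zero, add_zero] at h1
    · have : Module.finrank ℂ Y ≠ 0 := Module.finrank_pos.ne'
      exact this (by exact_mod_cast h1.symm)
    · intro γ hγ
      rw [map_smul]
      have : LinearMap.trace ℂ Y (g γ) = 0 := hcon γ (by simpa using hγ)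
      rw [this, smul_zero]
  have hdim := dim_lt μ g hμ hex
  obtain ⟨⟨m, hm⟩, hmm⟩ := symp_lemma2 (E := (g.linHom g).invariants)
    (P := (rF μ g).invariants) ((om Y).restrict (rF μ g).invariants)
    (fun x => om_self x.1)
    (fun x hx => Subtype.ext (om_nondeg μ g x.1 x.2 fun ψ hψ => hx ⟨ψ, hψ⟩))
    ((dl X).restrict hdl) (by
      rintro ⟨m, hm⟩ ⟨m', hm'⟩
      show om Y (dl X m) (dl X m') = 0
      rw [om_dl]
      have : ((dl X m') e0 * X e1 - X e1 * (dl X m') e0) +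
          (X e0 * (dl X m') e1 - (dl X m') e1 * X e0) =
          (X e0 * X e1 - X e1 * X e0) * m' - m' * (X e0 * X e1 - X e1 * X e0) := by
        simp only [dl_apply]; noncomm_ring
      rw [this, hcommE m' hm', sub_self, mul_zero, map_zero, neg_zero])
    ⟨1, h1⟩ (Subtype.ext hk1) (by
      rintro ⟨m, hm⟩ hk
      have hk' : dl X m = 0 := congrArg Subtype.val hk
      obtain ⟨z, hz⟩ := hschur m (hE m hm) fun v => by
        have := LinearMap.congr_fun hk' v
        rw [dl_apply] at this
        exact sub_eq_zero.mp this
      exact ⟨z, Subtype.ext hz.symm⟩)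
    hdim ⟨φ, hinv φ hφ⟩ (by
      rintro ⟨m, hm⟩
      show om Y (dl X m) φ = 0
      rw [om_dl, hφ2, mul_zero, map_zero, neg_zero])
  refine ⟨m, hE m hm, fun v => ?_⟩
  have h2 : dl X m = φ := congrArg Subtype.val hmm
  rw [← h2, dl_apply]
end
end S19
end

open scoped TensorProduct

noncomputable section
namespace S19

section
variable {A : Type} [Ring A] [Algebra ℂ A] {M : Type} [AddCommGroup M] [Module ℂ M]

/-- derivations along `ρ` -/
def IsD (ρ : A →ₐ[ℂ] Module.End ℂ M) (d : A →ₗ[ℂ] Module.End ℂ M) : Prop :=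
  ∀ a b, d (a * b) = ρ a * d b + d a * ρ b

def adT (ρ : A →ₐ[ℂ] Module.End ℂ M) (d : A →ₗ[ℂ] Module.End ℂ M) (T : Module.End ℂ M) :
    A →ₗ[ℂ] Module.End ℂ M :=
  d - (LinearMap.mulLeft ℂ T ∘ₗ ρ.toLinearMap - LinearMap.mulRight ℂ T ∘ₗ ρ.toLinearMap)

lemma adT_apply (ρ : A →ₐ[ℂ] Module.End ℂ M) (d : A →ₗ[ℂ] Module.End ℂ M)
    (T : Module.End ℂ M) (a : A) : adT ρ d T a = d a - (T * ρ a - ρ a * T) := rfl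

lemma IsD.adT {ρ : A →ₐ[ℂ] Module.End ℂ M} {d : A →ₗ[ℂ] Module.End ℂ M} (h : IsD ρ d)
    (T : Module.End ℂ M) : IsD ρ (adT ρ d T) := by
  intro a b
  rw [adT_apply, adT_apply, adT_apply, h, map_mul]
  noncomm_ring

lemma IsD.one {ρ : A →ₐ[ℂ] Module.End ℂ M} {d : A →ₗ[ℂ] Module.End ℂ M} (h : IsD ρ d) :
    d 1 = 0 := by
  have := h 1 1
  simpa using this

lemma sep {ρ : A →ₐ[ℂ] Module.End ℂ M} {d : A →ₗ[ℂ] Module.End ℂ M} (h : IsD ρ d)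
    {ι : Type} [Fintype ι] (a a' : ι → A) (z : ℂ) (h1 : z • ∑ k, ρ (a k) * ρ (a' k) = 1) (b : A)
    (hb : ∑ k, d (b * a k) * ρ (a' k) = ∑ k, d (a k) * ρ (a' k) * ρ b) :
    d b = (z • ∑ k, d (a k) * ρ (a' k)) * ρ b - ρ b * (z • ∑ k, d (a k) * ρ (a' k)) := by
  have h2 : ∑ k, d (b * a k) * ρ (a' k) =
      ρ b * ∑ k, d (a k) * ρ (a' k) + d b * ∑ k, ρ (a k) * ρ (a' k) := by
    rw [Finset.mul_sum, Finset.mul_sum, ← Finset.sum_add_distrib]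
    refine Finset.sum_congr rfl fun k _ => ?_
    rw [h, add_mul, mul_assoc, mul_assoc]
  rw [hb, ← Finset.sum_mul] at h2
  rw [smul_mul_assoc, mul_smul_comm, h2, smul_add, ← mul_smul_comm z (d b), h1, mul_one]
  abel

lemma kill_of_gens {S : Type} {r : FreeAlgebra ℂ S → FreeAlgebra ℂ S → Prop}
    {ρ : RingQuot r →ₐ[ℂ] Module.End ℂ M} {d : RingQuot r →ₗ[ℂ] Module.End ℂ M} (h : IsD ρ d)
    (hs : ∀ s, d (RingQuot.mkAlgHom ℂ r (FreeAlgebra.ι ℂ s)) = 0) (a : RingQuot r) : d a = 0 := by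
  obtain ⟨f, rfl⟩ := RingQuot.mkAlgHom_surjective ℂ r a
  induction f using FreeAlgebra.induction with
  | grade0 z =>
    rw [AlgHom.commutes, Algebra.algebraMap_eq_smul_one, map_smul, h.one, smul_zero]
  | grade1 s => exact hs s
  | mul a b ha hb => rw [map_mul, h, ha, hb]; simp
  | add a b ha hb => rw [map_add, map_add, ha, hb, add_zero]

/-- group averaging -/
lemma avg_group {G : Type} [Group G] [Fintype G] {ρ : A →ₐ[ℂ] Module.End ℂ M}
    {d : A →ₗ[ℂ] Module.End ℂ M} (h : IsD ρ d) (e : G → A) (he1 : e 1 = 1)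
    (hem : ∀ x y, e x * e y = e (x * y)) (x : G) :
    d (e x) = ((Fintype.card G : ℂ)⁻¹ • ∑ k, d (e k) * ρ (e k⁻¹)) * ρ (e x) -
      ρ (e x) * ((Fintype.card G : ℂ)⁻¹ • ∑ k, d (e k) * ρ (e k⁻¹)) := by
  refine sep h (fun k => e k) (fun k => e k⁻¹) _ ?_ (e x) ?_
  · simp_rw [← map_mul, hem]
    simp only [mul_inv_cancel, he1, map_one, Finset.sum_const, Finset.card_univ]
    rw [← Nat.cast_smul_eq_nsmul ℂ, smul_smul, inv_mul_cancel₀, one_smul]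
    exact_mod_cast Fintype.card_ne_zero
  · refine Fintype.sum_equiv (Equiv.mulLeft x) _ _ fun k => ?_
    simp only [Equiv.coe_mulLeft]
    rw [hem, mul_assoc, ← map_mul, hem]
    simp

lemma inner_of_factor {Y : Type} [AddCommGroup Y] [Module ℂ Y] [FiniteDimensional ℂ Y]
    [Nontrivial Y] (ρY : A →ₐ[ℂ] Module.End ℂ Y) (hs : Function.Surjective ρY)
    {ρ : A →ₐ[ℂ] Module.End ℂ M} {d : A →ₗ[ℂ] Module.End ℂ M} (h : IsD ρ d)
    (hρ : ∀ b, ρY b = 0 → ρ b = 0) (hd : ∀ b, ρY b = 0 → d b = 0) :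
    ∃ (n : ℕ) (a a' : Fin n → A), ∀ b,
      d b = (∑ k, d (a k) * ρ (a' k)) * ρ b - ρ b * (∑ k, d (a k) * ρ (a' k)) := by
  classical
  let B := Module.finBasis ℂ Y
  have hpos : 0 < Module.finrank ℂ Y := Module.finrank_pos
  let q : Fin (Module.finrank ℂ Y) := ⟨0, hpos⟩
  choose s hs using hs
  let a : Fin (Module.finrank ℂ Y) → A := fun k => s ((B.coord q).smulRight (B k))
  let a' : Fin (Module.finrank ℂ Y) → A := fun k => s ((B.coord k).smulRight (B q))
  have ha : ∀ k, ρY (a k) = (B.coord q).smulRight (B k) := fun k => hs _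
  have ha' : ∀ k, ρY (a' k) = (B.coord k).smulRight (B q) := fun k => hs _
  have hd' : ∀ x y, ρY x = ρY y → d x = d y := fun x y hxy => by
    rw [← sub_eq_zero, ← map_sub]
    exact hd _ (by rw [map_sub, hxy, sub_self])
  have hρ' : ∀ x y, ρY x = ρY y → ρ x = ρ y := fun x y hxy => by
    rw [← sub_eq_zero, ← map_sub]
    exact hρ _ (by rw [map_sub, hxy, sub_self])
  refine ⟨_, a, a', fun b => ?_⟩
  have := sep h a a' 1 ?_ b ?_
  · rw [one_smul] at this
    exact this
  · rw [one_smul]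
    have : (∑ k, ρ (a k) * ρ (a' k)) = ρ (∑ k, a k * a' k) := by simp
    rw [this, ← map_one ρ]
    apply hρ'
    rw [map_sum, map_one]
    refine B.ext fun j => ?_
    simp only [map_mul, ha, ha', LinearMap.sum_apply, Module.End.mul_apply,
      LinearMap.smulRight_apply, Module.End.one_apply]
    rw [Finset.sum_eq_single j]
    · simp
    · intro k _ hk
      simp [Finsupp.single_apply, hk.symm]
    · simp
  · have e1 : ∀ k, d (b * a k) = ∑ l, B.repr (ρY b (B k)) l • d (a l) := by
      intro k
      have : ∑ l, B.repr (ρY b (B k)) l • d (a l) = d (∑ l, B.repr (ρY b (B k)) l • a l) := by simp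
      rw [this]
      apply hd'
      rw [map_sum, map_mul]
      refine LinearMap.ext fun y => ?_
      simp only [map_smul, ha, Module.End.mul_apply, LinearMap.smulRight_apply,
        LinearMap.sum_apply, LinearMap.smul_apply]
      conv_lhs => rw [← B.sum_repr (ρY b (B k)), Finset.smul_sum]
      refine Finset.sum_congr rfl fun l _ => ?_
      rw [smul_smul, smul_smul, mul_comm]
    have e2 : ∀ l, ρ (a' l) * ρ b = ∑ k, B.repr (ρY b (B k)) l • ρ (a' k) := by
      intro l
      have : ∑ k, B.repr (ρY b (B k)) l • ρ (a' k) = ρ (∑ k, B.repr (ρY b (B k)) l • a' k) := by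
        simp
      rw [this, ← map_mul]
      apply hρ'
      rw [map_sum, map_mul]
      refine B.ext fun j => ?_
      simp [ha', Finsupp.single_apply]
    simp_rw [e1, mul_assoc, e2, Finset.sum_mul, Finset.mul_sum]
    rw [Finset.sum_comm]
    refine Finset.sum_congr rfl fun l _ => Finset.sum_congr rfl fun k _ => ?_
    rw [smul_mul_assoc, mul_smul_comm]
end
end S19
end

open scoped TensorProduct

noncomputable section
namespace S19
section
variable (Γ : Subgroup SL2) [Fintype Γ] [DecidableEq Γ] (c : Γ → ℂ)

def oneV (v : LL) : Hone Γ c := v 0 • oneX Γ c 0 + v 1 • oneX Γ c 1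

lemma oneV_eq (v : LL) : oneV Γ c v = RingQuot.mkAlgHom ℂ (BRel Γ c) (bV Γ v) := by
  simp [oneV, bV, oneX]

lemma oneG_mul (γ δ : Γ) : oneG Γ c γ * oneG Γ c δ = oneG Γ c (γ * δ) := by
  rw [oneG, oneG, oneG, ← map_mul]
  exact RingQuot.mkAlgHom_rel ℂ (BRel.grp_mul γ δ)

lemma oneG_one : oneG Γ c 1 = 1 := by
  rw [oneG, ← map_one (RingQuot.mkAlgHom ℂ (BRel Γ c))]
  exact RingQuot.mkAlgHom_rel ℂ BRel.grp_one

lemma oneG_conj (γ : Γ) (v : LL) : oneG Γ c γ * oneV Γ c v * oneG Γ c γ⁻¹ =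
    oneV Γ c (rL Γ.subtype γ v) := by
  rw [oneV_eq, oneV_eq, oneG, oneG, ← map_mul, ← map_mul]
  exact RingQuot.mkAlgHom_rel ℂ (BRel.grp_conj γ v)

lemma one_comm : oneX Γ c 0 * oneX Γ c 1 - oneX Γ c 1 * oneX Γ c 0 =
    1 + ∑ γ ∈ Finset.univ.filter (fun γ : Γ => γ ≠ 1), c γ • oneG Γ c γ := by
  have := RingQuot.mkAlgHom_rel ℂ (BRel.comm (Γ := Γ) (c := c))
  simp only [map_sub, map_mul, map_add, map_one, map_sum, map_smul] at this
  exact this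

def oneVL : LL →ₗ[ℂ] Hone Γ c where
  toFun := oneV Γ c
  map_add' u v := by simp only [oneV, Pi.add_apply, add_smul]; abel
  map_smul' z v := by simp only [oneV, Pi.smul_apply, smul_eq_mul, mul_smul, smul_add]; rfl

lemma oneVL_apply (v : LL) : oneVL Γ c v = oneV Γ c v := rfl

lemma oneV_e0 : oneV Γ c e0 = oneX Γ c 0 := by simp [oneV]
lemma oneV_e1 : oneV Γ c e1 = oneX Γ c 1 := by simp [oneV]

lemma one_kills (Y : Type) [AddCommGroup Y] [Module ℂ Y] [FiniteDimensional ℂ Y] [Nontrivial Y]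
    (ρY : Hone Γ c →ₐ[ℂ] Module.End ℂ Y) (hs : Function.Surjective ρY)
    (d : Hone Γ c →ₗ[ℂ] Module.End ℂ Y) (hd : IsD ρY d) (b : Hone Γ c) (hb : ρY b = 0) :
    d b = 0 := by
  obtain ⟨T, hT⟩ : ∃ T, ∀ γ : Γ, d (oneG Γ c γ) = T * ρY (oneG Γ c γ) - ρY (oneG Γ c γ) * T :=
    ⟨_, avg_group hd (oneG Γ c) (oneG_one Γ c) (oneG_mul Γ c)⟩
  have hd' := hd.adT T
  have hG : ∀ γ, adT ρY d T (oneG Γ c γ) = 0 := fun γ => by rw [adT_apply, hT, sub_self]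
  set d' := adT ρY d T with hd'def
  let g : Representation ℂ Γ Y :=
    { toFun := fun γ => ρY (oneG Γ c γ)
      map_one' := by rw [oneG_one, map_one]
      map_mul' := fun x y => by rw [← oneG_mul, map_mul] }
  have hg : ∀ γ, g γ = ρY (oneG Γ c γ) := fun _ => rfl
  have key := rank_one_H1 Γ.subtype Γ.subtype_injective g c (ρY.toLinearMap ∘ₗ oneVL Γ c) ?_ ?_ ?_
    (d' ∘ₗ oneVL Γ c) ?_ ?_
  · obtain ⟨m, hm1, hm2⟩ := key
    have hfin := hd'.adT (-m)
    have hz := kill_of_gens hfin (by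
      rintro (γ | p)
      · change adT ρY d' (-m) (oneG Γ c γ) = 0
        rw [adT_apply, hG, ← hg, neg_mul, mul_neg, hm1]
        simp
      · change adT ρY d' (-m) (oneX Γ c p) = 0
        have hp : ∃ v, oneX Γ c p = oneV Γ c v := by
          fin_cases p
          · exact ⟨e0, (oneV_e0 Γ c).symm⟩
          · exact ⟨e1, (oneV_e1 Γ c).symm⟩
        obtain ⟨v, hv⟩ := hp
        have h2 : d' (oneV Γ c v) = ρY (oneV Γ c v) * m - m * ρY (oneV Γ c v) := hm2 v
        rw [hv, adT_apply, h2]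
        noncomm_ring)
    have := hz b
    rw [adT_apply, hd'def, adT_apply, hb] at this
    simpa using this
  · intro γ v
    change ρY (oneG Γ c γ) * ρY (oneV Γ c v) * ρY (oneG Γ c γ⁻¹) = ρY (oneV Γ c _)
    rw [← map_mul, ← map_mul, oneG_conj]
  · change ρY (oneV Γ c e0) * ρY (oneV Γ c e1) - ρY (oneV Γ c e1) * ρY (oneV Γ c e0) = _
    rw [oneV_e0, oneV_e1, ← map_mul, ← map_mul, ← map_sub, one_comm]
    simp only [map_add, map_one, map_sum, map_smul, hg]
  · intro m h1 h2
    refine schur_scalar ρY hs m fun a => ?_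
    obtain ⟨f, rfl⟩ := RingQuot.mkAlgHom_surjective ℂ (BRel Γ c) a
    induction f using FreeAlgebra.induction with
    | grade0 z => rw [AlgHom.commutes, AlgHom.commutes]; exact Algebra.commutes z m
    | grade1 s =>
      rcases s with γ | p
      · exact h1 γ
      · fin_cases p
        · have := h2 e0
          simp only [LinearMap.comp_apply, oneVL_apply, oneV_e0] at this
          exact this
        · have := h2 e1
          simp only [LinearMap.comp_apply, oneVL_apply, oneV_e1] at this
          exact this
    | mul a b ha hb => rw [map_mul, map_mul, mul_assoc, hb, ← mul_assoc, ha, mul_assoc]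
    | add a b ha hb => rw [map_add, map_add, add_mul, ha, hb, mul_add]
  · intro γ v
    change ρY (oneG Γ c γ) * d' (oneV Γ c v) * ρY (oneG Γ c γ⁻¹) = d' (oneV Γ c _)
    rw [← oneG_conj, hd', hd', hG, hG]
    simp
  · change (d' (oneV Γ c e0) * ρY (oneV Γ c e1) - ρY (oneV Γ c e1) * d' (oneV Γ c e0)) +
      (ρY (oneV Γ c e0) * d' (oneV Γ c e1) - d' (oneV Γ c e1) * ρY (oneV Γ c e0)) = 0
    rw [oneV_e0, oneV_e1]
    have h1 := congrArg d' (one_comm Γ c)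
    rw [map_sub, hd', hd', map_add, hd'.one, map_sum, Finset.sum_eq_zero] at h1
    · rw [zero_add] at h1
      rw [← h1]; abel
    · intro γ _
      rw [map_smul, hG, smul_zero]
end
end S19
end

open scoped TensorProduct

noncomputable section
namespace S19
section
variable (Γ : Subgroup SL2) [Fintype Γ] [DecidableEq Γ] (N : ℕ) (c : Γ → ℂ)

def hV (v : Fin N → LL) : HN Γ N 0 c := RingQuot.mkAlgHom ℂ (HRel Γ N 0 c) (nV Γ N v)

lemma hV_single (i : Fin N) (v : LL) :
    hV Γ N c (Pi.single i v) = v 0 • hX Γ N 0 c i 0 + v 1 • hX Γ N 0 c i 1 := by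
  rw [hV, nV, Finset.sum_eq_single i]
  · simp [hX, Fin.sum_univ_two]
  · intro j _ hj
    simp [Pi.single_eq_of_ne hj]
  · simp

lemma hX_eq (i : Fin N) (p : Fin 2) :
    hX Γ N 0 c i p = hV Γ N c (Pi.single i (Pi.single p 1)) := by
  rw [hV_single]; fin_cases p <;> simp

lemma hG_mul (x y : WP Γ N) : hG Γ N 0 c x * hG Γ N 0 c y = hG Γ N 0 c (x * y) := by
  rw [hG, hG, hG, ← map_mul]
  exact RingQuot.mkAlgHom_rel ℂ (HRel.grp_mul x y)

lemma hG_one : hG Γ N 0 c 1 = 1 := by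
  rw [hG, ← map_one (RingQuot.mkAlgHom ℂ (HRel Γ N 0 c))]
  exact RingQuot.mkAlgHom_rel ℂ HRel.grp_one

lemma hG_conj (x : WP Γ N) (v : Fin N → LL) :
    hG Γ N 0 c x * hV Γ N c v * hG Γ N 0 c x⁻¹ = hV Γ N c (actL Γ N x v) := by
  rw [hV, hV, hG, hG, ← map_mul, ← map_mul]
  exact RingQuot.mkAlgHom_rel ℂ (HRel.grp_conj x v)

lemma hG_conj' (x : WP Γ N) (v : Fin N → LL) :
    hG Γ N 0 c x * hV Γ N c v = hV Γ N c (actL Γ N x v) * hG Γ N 0 c x := by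
  rw [← hG_conj, mul_assoc _ (hG Γ N 0 c x⁻¹), hG_mul]
  simp [hG_one]

lemma h_r1 (i : Fin N) : hX Γ N 0 c i 0 * hX Γ N 0 c i 1 - hX Γ N 0 c i 1 * hX Γ N 0 c i 0 =
    1 + ∑ γ ∈ Finset.univ.filter (fun γ : Γ => γ ≠ 1), c γ • hG Γ N 0 c (tG i γ) := by
  have := RingQuot.mkAlgHom_rel ℂ (HRel.r1 (Γ := Γ) (N := N) (k := 0) (c := c) i)
  simp only [map_sub, map_mul, map_add, map_one, map_sum, map_smul, zero_div, zero_smul,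
    add_zero] at this
  exact this

lemma h_r2 (i j : Fin N) (hij : i ≠ j) (u v : LL) :
    hV Γ N c (Pi.single i u) * hV Γ N c (Pi.single j v) =
      hV Γ N c (Pi.single j v) * hV Γ N c (Pi.single i u) := by
  have := RingQuot.mkAlgHom_rel ℂ (HRel.r2 (Γ := Γ) (N := N) (k := 0) (c := c) i j hij u v)
  simp only [map_sub, map_mul, map_smul, zero_div, neg_zero, zero_smul, map_zero] at this
  exact sub_eq_zero.mp this

lemma actL_tG_same (i : Fin N) (γ : Γ) (v : LL) :
    actL Γ N (tG i γ) (Pi.single i v) = Pi.single i (rL Γ.subtype γ v) := by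
  funext l
  by_cases h : l = i
  · subst h; simp [actL, tG, rL]
  · simp [actL, tG, h]

lemma actL_tG_ne (i j : Fin N) (hij : j ≠ i) (γ : Γ) (v : LL) :
    actL Γ N (tG i γ) (Pi.single j v) = Pi.single j v := by
  funext l
  by_cases h : l = j
  · subst h; simp [actL, tG, hij]
  · simp [actL, tG, h]

lemma actL_inr (σ : Equiv.Perm (Fin N)) (i : Fin N) (v : LL) :
    actL Γ N (SemidirectProduct.inr σ) (Pi.single i v) = Pi.single (σ i) v := by
  funext l
  by_cases h : l = σ i
  · subst h; simp [actL]
  · have : σ⁻¹ l ≠ i := fun h' => h (by rw [← h']; simp)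
    have h3 : (σ.symm l) ≠ i := this
    simp [actL, h, h3]

lemma inr_tG (σ : Equiv.Perm (Fin N)) (i : Fin N) (γ : Γ) :
    (SemidirectProduct.inr σ : WP Γ N) * tG i γ = tG (σ i) γ * SemidirectProduct.inr σ := by
  ext l
  · simp only [tG, SemidirectProduct.mul_left, SemidirectProduct.left_inr,
      SemidirectProduct.right_inr, SemidirectProduct.left_inl, SemidirectProduct.right_inl,
      one_mul, map_one, mul_one]
    show (((Pi.mulSingle i γ : Fin N → Γ) (σ.symm l) : Γ) : SL2) _ _ = _
    by_cases h : l = σ i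
    · subst h; simp
    · have : σ.symm l ≠ i := fun h' => h (by rw [← h']; simp)
      simp [h, this]
  · simp [tG]

def iota (i : Fin N) : Hone Γ c →ₐ[ℂ] HN Γ N 0 c :=
  RingQuot.liftAlgHom ℂ ⟨FreeAlgebra.lift ℂ
    (Sum.elim (fun γ => hG Γ N 0 c (tG i γ)) (fun p => hX Γ N 0 c i p)), by
      have hbG : ∀ γ, FreeAlgebra.lift ℂ (Sum.elim (fun γ => hG Γ N 0 c (tG i γ))
          (fun p => hX Γ N 0 c i p)) (bG Γ γ) = hG Γ N 0 c (tG i γ) := fun γ => by simp [bG]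
      have hbX : ∀ p, FreeAlgebra.lift ℂ (Sum.elim (fun γ => hG Γ N 0 c (tG i γ))
          (fun p => hX Γ N 0 c i p)) (bX Γ p) = hX Γ N 0 c i p := fun p => by simp [bX]
      have hbV : ∀ v, FreeAlgebra.lift ℂ (Sum.elim (fun γ => hG Γ N 0 c (tG i γ))
          (fun p => hX Γ N 0 c i p)) (bV Γ v) = hV Γ N c (Pi.single i v) := fun v => by
        rw [bV, map_add, map_smul, map_smul, hbX, hbX, hV_single]
      intro x y hxy
      cases hxy with
      | grp_mul γ δ =>
        rw [map_mul, hbG, hbG, hbG, hG_mul, tG, tG, tG, ← map_mul, ← Pi.mulSingle_mul]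
      | grp_one => rw [hbG, map_one, tG, Pi.mulSingle_one, map_one, hG_one]
      | grp_conj γ v =>
        rw [map_mul, map_mul, hbG, hbG, hbV, hbV]
        have : (tG i γ⁻¹ : WP Γ N) = (tG i γ)⁻¹ := by
          rw [tG, tG, Pi.mulSingle_inv, map_inv]
        rw [this, hG_conj, actL_tG_same]
        rfl
      | comm =>
        simp only [map_sub, map_mul, map_add, map_one, map_sum, map_smul, hbX, hbG]
        exact h_r1 Γ N c i⟩

lemma iota_G (i : Fin N) (γ : Γ) : iota Γ N c i (oneG Γ c γ) = hG Γ N 0 c (tG i γ) := by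
  simp [iota, oneG, bG]

lemma iota_X (i : Fin N) (p : Fin 2) : iota Γ N c i (oneX Γ c p) = hX Γ N 0 c i p := by
  simp [iota, oneX, bX]

/-- induction principle -/
lemma one_ind (P : Hone Γ c → Prop) (hsc : ∀ z : ℂ, P (algebraMap ℂ _ z))
    (hg : ∀ γ, P (oneG Γ c γ)) (hx : ∀ p, P (oneX Γ c p))
    (hmul : ∀ a b, P a → P b → P (a * b)) (hadd : ∀ a b, P a → P b → P (a + b))
    (b : Hone Γ c) : P b := by
  obtain ⟨f, rfl⟩ := RingQuot.mkAlgHom_surjective ℂ (BRel Γ c) b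
  induction f using FreeAlgebra.induction with
  | grade0 z => rw [AlgHom.commutes]; exact hsc z
  | grade1 s =>
    rcases s with γ | p
    · exact hg γ
    · exact hx p
  | mul a b ha hb => rw [map_mul]; exact hmul _ _ ha hb
  | add a b ha hb => rw [map_add]; exact hadd _ _ ha hb

lemma iota_comm (i j : Fin N) (hij : i ≠ j) (a b : Hone Γ c) :
    Commute (iota Γ N c i a) (iota Γ N c j b) := by
  have hGX : ∀ i j : Fin N, i ≠ j → ∀ γ p, Commute (hG Γ N 0 c (tG i γ)) (hX Γ N 0 c j p) := by
    intro i j hij γ p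
    rw [hX_eq]
    have := hG_conj' Γ N c (tG i γ) (Pi.single j (Pi.single p 1))
    rw [actL_tG_ne Γ N i j hij.symm] at this
    exact this
  induction a using one_ind with
  | hsc z => rw [AlgHom.commutes]; exact Algebra.commutes z _
  | hmul a b ha hb => rw [map_mul]; exact ha.mul_left hb
  | hadd a b ha hb => rw [map_add]; exact ha.add_left hb
  | hg γ =>
    rw [iota_G]
    induction b using one_ind with
    | hsc z => rw [AlgHom.commutes]; exact (Algebra.commutes z _).symm
    | hmul a b ha hb => rw [map_mul]; exact ha.mul_right hb
    | hadd a b ha hb => rw [map_add]; exact ha.add_right hb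
    | hg δ =>
      rw [iota_G, Commute, SemiconjBy, hG_mul, hG_mul, tG, tG, ← map_mul, ← map_mul,
        (Pi.mulSingle_commute (f := fun _ : Fin N => Γ) hij γ δ).eq]
    | hx p => rw [iota_X]; exact hGX i j hij γ p
  | hx p =>
    rw [iota_X]
    induction b using one_ind with
    | hsc z => rw [AlgHom.commutes]; exact (Algebra.commutes z _).symm
    | hmul a b ha hb => rw [map_mul]; exact ha.mul_right hb
    | hadd a b ha hb => rw [map_add]; exact ha.add_right hb
    | hg δ => rw [iota_G]; exact (hGX j i hij.symm δ p).symm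
    | hx q => rw [iota_X, hX_eq, hX_eq]; exact h_r2 Γ N c i j hij _ _

lemma inr_iota (σ : Equiv.Perm (Fin N)) (i : Fin N) (b : Hone Γ c) :
    hG Γ N 0 c (SemidirectProduct.inr σ) * iota Γ N c i b =
      iota Γ N c (σ i) b * hG Γ N 0 c (SemidirectProduct.inr σ) := by
  induction b using one_ind with
  | hsc z => rw [AlgHom.commutes, AlgHom.commutes]; exact (Algebra.commutes z _).symm
  | hmul a b ha hb => rw [map_mul, map_mul, ← mul_assoc, ha, mul_assoc, hb, mul_assoc]
  | hadd a b ha hb => rw [map_add, map_add, mul_add, ha, hb, add_mul]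
  | hg γ => rw [iota_G, iota_G, hG_mul, hG_mul, inr_tG]
  | hx p => rw [iota_X, iota_X, hX_eq, hX_eq, hG_conj', actL_inr]

lemma h_kill {M : Type} [AddCommGroup M] [Module ℂ M] {ρ : HN Γ N 0 c →ₐ[ℂ] Module.End ℂ M}
    {d : HN Γ N 0 c →ₗ[ℂ] Module.End ℂ M} (h : IsD ρ d)
    (h1 : ∀ σ, d (hG Γ N 0 c (SemidirectProduct.inr σ)) = 0)
    (h2 : ∀ i b, d (iota Γ N c i b) = 0) (a : HN Γ N 0 c) : d a = 0 := by
  refine kill_of_gens h ?_ a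
  rintro (x | ⟨i, p⟩)
  · change d (hG Γ N 0 c x) = 0
    let S : Submonoid (WP Γ N) :=
      { carrier := {x | d (hG Γ N 0 c x) = 0}
        one_mem' := by
          show d (hG Γ N 0 c 1) = 0
          rw [hG_one, h.one]
        mul_mem' := by
          intro x y hx hy
          show d (hG Γ N 0 c (x * y)) = 0
          have hx' : d (hG Γ N 0 c x) = 0 := hx
          have hy' : d (hG Γ N 0 c y) = 0 := hy
          rw [← hG_mul, h, hx', hy']; simp }
    have hl : ∀ f : Fin N → Γ, f ∈ S.comap (SemidirectProduct.inl (φ := wphi Γ N)) := by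
      intro f
      refine Submonoid.pi_mem_of_mulSingle_mem f fun i => ?_
      show d (hG Γ N 0 c (tG i (f i))) = 0
      rw [← iota_G, h2]
    have : x ∈ S := by
      rw [← SemidirectProduct.inl_left_mul_inr_right x]
      exact S.mul_mem (hl _) (h1 _)
    exact this
  · change d (hX Γ N 0 c i p) = 0
    rw [← iota_X, h2]
end
end S19
end

open scoped TensorProduct

noncomputable section
namespace S19
section
variable (Γ : Subgroup SL2) [Fintype Γ] [DecidableEq Γ] (N : ℕ) (c : Γ → ℂ)
variable {Y : Type} [AddCommGroup Y] [Module ℂ Y] {W : Type} [AddCommGroup W] [Module ℂ W]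

def isAct (ρY : Hone Γ c →ₐ[ℂ] Module.End ℂ Y)
    (ρM : HN Γ N 0 c →ₐ[ℂ] Module.End ℂ (W ⊗[ℂ] (⨂[ℂ] _ : Fin N, Y))) : Prop :=
  ∀ (i : Fin N) (b : Hone Γ c) (w : W) (v : Fin N → Y),
    ρM (iota Γ N c i b) (w ⊗ₜ[ℂ] PiTensorProduct.tprod ℂ v) =
      w ⊗ₜ[ℂ] PiTensorProduct.tprod ℂ (Function.update v i (ρY b (v i)))

lemma act_formula (ρY : Hone Γ c →ₐ[ℂ] Module.End ℂ Y)
    (ρW : Representation ℂ (Equiv.Perm (Fin N)) W)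
    (ρM : HN Γ N 0 c →ₐ[ℂ] Module.End ℂ (W ⊗[ℂ] (⨂[ℂ] _ : Fin N, Y)))
    (hMG : ∀ (g : WP Γ N) (w : W) (v : Fin N → Y),
      ρM (hG Γ N 0 c g) (w ⊗ₜ[ℂ] PiTensorProduct.tprod ℂ v) =
        ρW g.right w ⊗ₜ[ℂ]
          PiTensorProduct.tprod ℂ fun i => ρY (oneG Γ c (g.left i)) (v (g.right⁻¹ i)))
    (hMX : ∀ (i : Fin N) (p : Fin 2) (w : W) (v : Fin N → Y),
      ρM (hX Γ N 0 c i p) (w ⊗ₜ[ℂ] PiTensorProduct.tprod ℂ v) =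
        w ⊗ₜ[ℂ] PiTensorProduct.tprod ℂ fun l =>
          if l = i then ρY (oneX Γ c p) (v l) else v l) :
    isAct Γ N c ρY ρM := by
  intro i b w
  induction b using one_ind with
  | hsc z =>
    intro v
    rw [AlgHom.commutes, AlgHom.commutes, Module.algebraMap_end_apply, AlgHom.commutes,
      Module.algebraMap_end_apply, MultilinearMap.map_update_smul, Function.update_eq_self,
      TensorProduct.tmul_smul]
  | hmul a b ha hb =>
    intro v
    rw [map_mul, map_mul, Module.End.mul_apply, hb, ha, map_mul, Module.End.mul_apply,
      Function.update_idem, Function.update_self]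
  | hadd a b ha hb =>
    intro v
    rw [map_add, map_add, LinearMap.add_apply, hb, ha, map_add, LinearMap.add_apply,
      MultilinearMap.map_update_add, TensorProduct.tmul_add]
  | hg γ =>
    intro v
    rw [iota_G, hMG]
    have h1 : (tG i γ : WP Γ N).right = 1 := by simp [tG]
    have h2 : (tG i γ : WP Γ N).left = Pi.mulSingle i γ := by simp [tG]
    rw [h1, h2, map_one]
    congr 2
    funext l
    by_cases h : l = i
    · subst h; simp
    · simp [h, oneG_one]
  | hx p =>
    intro v
    rw [iota_X, hMX]
    congr 2
    funext l
    by_cases h : l = i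
    · subst h; simp
    · simp [h]

lemma ext_pure {P : Type} [AddCommGroup P] [Module ℂ P]
    {f g : (W ⊗[ℂ] (⨂[ℂ] _ : Fin N, Y)) →ₗ[ℂ] P}
    (h : ∀ w v, f (w ⊗ₜ[ℂ] PiTensorProduct.tprod ℂ v) = g (w ⊗ₜ[ℂ] PiTensorProduct.tprod ℂ v)) :
    f = g := by
  refine TensorProduct.ext' fun w t => ?_
  have : f ∘ₗ TensorProduct.mk ℂ W _ w = g ∘ₗ TensorProduct.mk ℂ W _ w := by
    refine PiTensorProduct.ext ?_
    ext v
    exact h w v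
  exact LinearMap.congr_fun this t

lemma act_zero {ρY : Hone Γ c →ₐ[ℂ] Module.End ℂ Y}
    {ρM : HN Γ N 0 c →ₐ[ℂ] Module.End ℂ (W ⊗[ℂ] (⨂[ℂ] _ : Fin N, Y))}
    (hA : isAct Γ N c ρY ρM) (i : Fin N) (b : Hone Γ c) (hb : ρY b = 0) :
    ρM (iota Γ N c i b) = 0 := by
  refine ext_pure N fun w v => ?_
  rw [hA, hb, LinearMap.zero_apply, LinearMap.zero_apply,
    MultilinearMap.map_update_zero, TensorProduct.tmul_zero]

section beta
variable {κ κ' : Type} [Fintype κ] [Fintype κ'] [DecidableEq κ] (bW : Module.Basis κ' ℂ W) (bY : Module.Basis κ ℂ Y)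

def Bas : Module.Basis (κ' × (Fin N → κ)) ℂ (W ⊗[ℂ] (⨂[ℂ] _ : Fin N, Y)) :=
  bW.tensorProduct (Basis.piTensorProduct (fun _ => bY))

def beta (i : Fin N) (k : κ') (p : Fin N → κ) : (W ⊗[ℂ] (⨂[ℂ] _ : Fin N, Y)) →ₗ[ℂ] Y :=
  ∑ q, ((Bas N bW bY).coord (k, Function.update p i q)).smulRight (bY q)

lemma beta_apply (i : Fin N) (k : κ') (p : Fin N → κ) (w : W) (v : Fin N → Y) (y : Y) :
    beta N bW bY i k p (w ⊗ₜ[ℂ] PiTensorProduct.tprod ℂ (Function.update v i y)) =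
      (bW.repr w k * ∏ l ∈ Finset.univ.erase i, bY.repr (v l) (p l)) • y := by
  have h : ∀ q, (Bas N bW bY).coord (k, Function.update p i q)
      (w ⊗ₜ[ℂ] PiTensorProduct.tprod ℂ (Function.update v i y)) =
      (bW.repr w k * ∏ l ∈ Finset.univ.erase i, bY.repr (v l) (p l)) * bY.repr y q := by
    intro q
    rw [Module.Basis.coord_apply, Bas, Module.Basis.tensorProduct_repr_tmul_apply,
      Basis.piTensorProduct_repr_tprod_apply,
      ← Finset.mul_prod_erase _ _ (Finset.mem_univ i)]
    have : ∀ l ∈ Finset.univ.erase i, bY.repr (Function.update v i y l)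
        (Function.update p i q l) = bY.repr (v l) (p l) := by
      intro l hl
      have := Finset.ne_of_mem_erase hl
      simp [this]
    rw [Finset.prod_congr rfl this]
    simp only [Function.update_self, smul_eq_mul]
    ring
  simp only [beta, LinearMap.sum_apply, LinearMap.smulRight_apply, h, mul_smul]
  rw [← Finset.smul_sum, ← Finset.smul_sum, bY.sum_repr]

lemma beta_inj (i : Fin N) (m : W ⊗[ℂ] (⨂[ℂ] _ : Fin N, Y))
    (h : ∀ k p, beta N bW bY i k p m = 0) : m = 0 := by
  refine (Bas N bW bY).ext_elem fun ⟨k, p⟩ => ?_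
  have := congrArg (fun y => bY.repr y (p i)) (h k p)
  simp only [beta, LinearMap.sum_apply, LinearMap.smulRight_apply] at this
  rw [bY.repr_sum_self] at this
  simpa using this

lemma beta_equiv {ρY : Hone Γ c →ₐ[ℂ] Module.End ℂ Y}
    {ρM : HN Γ N 0 c →ₐ[ℂ] Module.End ℂ (W ⊗[ℂ] (⨂[ℂ] _ : Fin N, Y))}
    (hA : isAct Γ N c ρY ρM) (i : Fin N) (k : κ') (p : Fin N → κ) (b : Hone Γ c)
    (m : W ⊗[ℂ] (⨂[ℂ] _ : Fin N, Y)) :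
    beta N bW bY i k p (ρM (iota Γ N c i b) m) = ρY b (beta N bW bY i k p m) := by
  have : beta N bW bY i k p ∘ₗ (ρM (iota Γ N c i b)) = (ρY b) ∘ₗ beta N bW bY i k p := by
    refine ext_pure N fun w v => ?_
    rw [LinearMap.comp_apply, LinearMap.comp_apply, hA, beta_apply]
    conv_rhs => rw [← Function.update_eq_self i v]
    rw [beta_apply, map_smul]
  exact LinearMap.congr_fun this m
end beta

def alpha (i : Fin N) (w : W) (v : Fin N → Y) : Y →ₗ[ℂ] (W ⊗[ℂ] (⨂[ℂ] _ : Fin N, Y)) :=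
  TensorProduct.mk ℂ W _ w ∘ₗ (PiTensorProduct.tprod ℂ).toLinearMap v i

lemma alpha_apply (i : Fin N) (w : W) (v : Fin N → Y) (y : Y) :
    alpha N i w v y = w ⊗ₜ[ℂ] PiTensorProduct.tprod ℂ (Function.update v i y) := rfl

lemma alpha_equiv {ρY : Hone Γ c →ₐ[ℂ] Module.End ℂ Y}
    {ρM : HN Γ N 0 c →ₐ[ℂ] Module.End ℂ (W ⊗[ℂ] (⨂[ℂ] _ : Fin N, Y))}
    (hA : isAct Γ N c ρY ρM) (i : Fin N) (w : W) (v : Fin N → Y) (b : Hone Γ c) (y : Y) :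
    ρM (iota Γ N c i b) (alpha N i w v y) = alpha N i w v (ρY b y) := by
  rw [alpha_apply, alpha_apply, hA, Function.update_idem, Function.update_self]

lemma D_kills [FiniteDimensional ℂ Y] [Nontrivial Y] [FiniteDimensional ℂ W]
    {ρY : Hone Γ c →ₐ[ℂ] Module.End ℂ Y} (hs : Function.Surjective ρY)
    {ρM : HN Γ N 0 c →ₐ[ℂ] Module.End ℂ (W ⊗[ℂ] (⨂[ℂ] _ : Fin N, Y))}
    (hA : isAct Γ N c ρY ρM)
    {D : HN Γ N 0 c →ₗ[ℂ] Module.End ℂ (W ⊗[ℂ] (⨂[ℂ] _ : Fin N, Y))} (hD : IsD ρM D)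
    (i : Fin N) (b : Hone Γ c) (hb : ρY b = 0) : D (iota Γ N c i b) = 0 := by
  classical
  let bW := Module.finBasis ℂ W
  let bY := Module.finBasis ℂ Y
  refine ext_pure N fun w v => ?_
  rw [LinearMap.zero_apply]
  refine beta_inj N bW bY i _ fun k p => ?_
  let d : Hone Γ c →ₗ[ℂ] Module.End ℂ Y :=
    { toFun := fun b => beta N bW bY i k p ∘ₗ D (iota Γ N c i b) ∘ₗ alpha N i w v
      map_add' := fun a b => by ext y; simp
      map_smul' := fun z b => by ext y; simp }
  have hd : IsD ρY d := by
    intro a b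
    ext y
    show beta N bW bY i k p (D (iota Γ N c i (a * b)) (alpha N i w v y)) =
      ρY a (beta N bW bY i k p (D (iota Γ N c i b) (alpha N i w v y))) +
      beta N bW bY i k p (D (iota Γ N c i a) (alpha N i w v (ρY b y)))
    rw [map_mul, hD, ← beta_equiv Γ N c bW bY hA, ← alpha_equiv Γ N c hA]
    simp
  have := one_kills Γ c Y ρY hs d hd b hb
  have h2 := LinearMap.congr_fun this (v i)
  have h3 : beta N bW bY i k p (D (iota Γ N c i b) (alpha N i w v (v i))) = 0 := h2
  rwa [alpha_apply, Function.update_eq_self] at h3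

lemma D_inner_finset [FiniteDimensional ℂ Y] [Nontrivial Y] [FiniteDimensional ℂ W]
    {ρY : Hone Γ c →ₐ[ℂ] Module.End ℂ Y} (hs : Function.Surjective ρY)
    {ρM : HN Γ N 0 c →ₐ[ℂ] Module.End ℂ (W ⊗[ℂ] (⨂[ℂ] _ : Fin N, Y))}
    (hA : isAct Γ N c ρY ρM)
    {D : HN Γ N 0 c →ₗ[ℂ] Module.End ℂ (W ⊗[ℂ] (⨂[ℂ] _ : Fin N, Y))} (hD : IsD ρM D)
    (S : Finset (Fin N)) : ∃ T, ∀ i ∈ S, ∀ b, adT ρM D T (iota Γ N c i b) = 0 := by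
  classical
  induction S using Finset.induction_on with
  | empty => exact ⟨0, by simp⟩
  | insert i S hi ih =>
    obtain ⟨T, hT⟩ := ih
    have hD' := hD.adT T
    set D' := adT ρM D T with hD'def
    have hk := inner_of_factor ρY hs (ρ := ρM.comp (iota Γ N c i))
      (d := D' ∘ₗ (iota Γ N c i).toLinearMap)
      (fun a b => by
        show D' (iota Γ N c i (a * b)) = ρM (iota Γ N c i a) * D' (iota Γ N c i b) +
          D' (iota Γ N c i a) * ρM (iota Γ N c i b)
        rw [map_mul, hD'])
      (fun b hb => act_zero Γ N c hA i b hb)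
      (fun b hb => D_kills Γ N c hs hA hD' i b hb)
    obtain ⟨n, a, a', h⟩ := hk
    set T' : Module.End ℂ (W ⊗[ℂ] (⨂[ℂ] _ : Fin N, Y)) :=
      ∑ k, D' (iota Γ N c i (a k)) * ρM (iota Γ N c i (a' k)) with hT'
    have h' : ∀ b, D' (iota Γ N c i b) =
      T' * ρM (iota Γ N c i b) - ρM (iota Γ N c i b) * T' := h
    have hsum : ∀ x, adT ρM D (T + T') x = D' x - (T' * ρM x - ρM x * T') := by
      intro x
      rw [hD'def, adT_apply, adT_apply]
      noncomm_ring
    refine ⟨T + T', fun j hj b => ?_⟩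
    rw [hsum]
    rcases Finset.mem_insert.mp hj with rfl | hj
    · rw [h', sub_self]
    · have hji : j ≠ i := fun e => hi (e ▸ hj)
      rw [hT j hj, zero_sub, neg_eq_zero, sub_eq_zero, hT', Finset.sum_mul, Finset.mul_sum]
      refine Finset.sum_congr rfl fun k _ => ?_
      have e1 := hD' (iota Γ N c j b) (iota Γ N c i (a k))
      have e2 := hD' (iota Γ N c i (a k)) (iota Γ N c j b)
      rw [hT j hj, zero_mul, add_zero] at e1
      rw [hT j hj, mul_zero, zero_add] at e2
      rw [← mul_assoc, ← e1, mul_assoc, ← map_mul,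
        ← (iota_comm Γ N c j i hji b (a' k)).eq, map_mul, ← mul_assoc, ← e2,
        (iota_comm Γ N c j i hji b (a k)).eq]

lemma D_inner [FiniteDimensional ℂ Y] [Nontrivial Y] [FiniteDimensional ℂ W]
    {ρY : Hone Γ c →ₐ[ℂ] Module.End ℂ Y} (hs : Function.Surjective ρY)
    {ρM : HN Γ N 0 c →ₐ[ℂ] Module.End ℂ (W ⊗[ℂ] (⨂[ℂ] _ : Fin N, Y))}
    (hA : isAct Γ N c ρY ρM)
    {D : HN Γ N 0 c →ₗ[ℂ] Module.End ℂ (W ⊗[ℂ] (⨂[ℂ] _ : Fin N, Y))} (hD : IsD ρM D) :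
    ∃ T, ∀ a, D a = T * ρM a - ρM a * T := by
  classical
  obtain ⟨T, hT⟩ := D_inner_finset Γ N c hs hA hD Finset.univ
  have hD' := hD.adT T
  set D' := adT ρM D T with hD'def
  let e : Equiv.Perm (Fin N) → HN Γ N 0 c := fun σ => hG Γ N 0 c (SemidirectProduct.inr σ)
  have hav := avg_group hD' e
    (by show hG Γ N 0 c (SemidirectProduct.inr 1) = 1; rw [map_one, hG_one])
    (fun x y => by
      show hG Γ N 0 c (SemidirectProduct.inr x) * hG Γ N 0 c (SemidirectProduct.inr y) =
        hG Γ N 0 c (SemidirectProduct.inr (x * y))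
      rw [hG_mul, map_mul])
  set T' : Module.End ℂ (W ⊗[ℂ] (⨂[ℂ] _ : Fin N, Y)) :=
    (Fintype.card (Equiv.Perm (Fin N)) : ℂ)⁻¹ • ∑ k, D' (e k) * ρM (e k⁻¹) with hT'
  have hinr : ∀ σ i b, e σ * iota Γ N c i b = iota Γ N c (σ i) b * e σ :=
    inr_iota Γ N c
  have key := h_kill Γ N c (hD'.adT T')
    (fun σ => by
      have := hav σ
      rw [adT_apply]
      exact sub_eq_zero.mpr this)
    (fun j b => by
      rw [adT_apply, hT j (Finset.mem_univ j), zero_sub, neg_eq_zero, sub_eq_zero, hT',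
        smul_mul_assoc, mul_smul_comm, Finset.sum_mul, Finset.mul_sum]
      congr 1
      refine Finset.sum_congr rfl fun σ _ => ?_
      have e1 := hD' (iota Γ N c j b) (e σ)
      have e2 := hD' (e σ) (iota Γ N c (σ⁻¹ j) b)
      rw [hT _ (Finset.mem_univ _), zero_mul, add_zero] at e1
      rw [hT _ (Finset.mem_univ _), mul_zero, zero_add, hinr,
        show σ (σ⁻¹ j) = j from σ.apply_symm_apply j] at e2
      rw [mul_assoc, ← map_mul, hinr, map_mul, ← mul_assoc, ← e2, e1, mul_assoc])
  refine ⟨T + T', fun a => ?_⟩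
  have := key a
  rw [adT_apply, hD'def, adT_apply, sub_eq_zero, sub_eq_iff_eq_add] at this
  rw [this]
  noncomm_ring

lemma coc_to_cob {A : Type} [Ring A] [Algebra ℂ A] {M : Type} [AddCommGroup M] [Module ℂ M]
    (ρ : A →ₐ[ℂ] Module.End ℂ M)
    (H : ∀ D : A →ₗ[ℂ] Module.End ℂ M, IsD ρ D → ∃ T, ∀ a, D a = T * ρ a - ρ a * T) :
    Zc (bimodEnd ρ) 1 ≤ Bc (bimodEnd ρ) 0 := by
  intro φ hφ
  have hupd : ∀ a : A, (fun _ : Fin 1 => a) = Function.update (fun _ => 0) 0 a := by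
    intro a; funext j; rw [Subsingleton.elim j 0]; simp
  let D : A →ₗ[ℂ] Module.End ℂ M := φ.toLinearMap (fun _ => 0) 0
  have hDa : ∀ a, D a = φ (fun _ => a) := fun a => by rw [hupd]; rfl
  have hD : IsD ρ D := by
    intro a b
    have h : dF (bimodEnd ρ) φ ![a, b] = 0 := hφ ![a, b]
    rw [dF] at h
    have t1 : (fun i : Fin 1 => (![a, b] : Fin 2 → A) i.succ) = fun _ => b := by
      funext i; fin_cases i; rfl
    have t2 : (fun i : Fin 1 => (![a, b] : Fin 2 → A) i.castSucc) = fun _ => a := by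
      funext i; fin_cases i; rfl
    have t3 : (fun j : Fin 1 => if (j : ℕ) < ((0 : Fin 1) : ℕ) then (![a, b] : Fin 2 → A) j.castSucc
            else if (j : ℕ) = ((0 : Fin 1) : ℕ) then (![a, b] : Fin 2 → A) j.castSucc * (![a, b] : Fin 2 → A) j.succ else (![a, b] : Fin 2 → A) j.succ) = fun _ => a * b := by
      funext i; fin_cases i; simp
    rw [Fin.sum_univ_one, t1, t2, t3, ← hDa, ← hDa, ← hDa] at h
    have h' : ρ a * D b + ((-1 : ℂ) ^ (0 + 1)) • D (a * b) + ((-1 : ℂ) ^ (1 + 1)) • (D a * ρ b) = 0 := h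
    have h3 : ρ a * D b + D a * ρ b - D (a * b) = 0 := by
      rw [← h']; norm_num; abel
    exact (sub_eq_zero.mp h3).symm
  obtain ⟨T, hT⟩ := H D hD
  refine ⟨MultilinearMap.constOfIsEmpty ℂ _ (-T), fun a => ?_⟩
  have ha : a = fun _ => a 0 := by funext j; exact congrArg a (Fin.fin_one_eq_zero j)
  rw [ha, ← hDa, hT, dF]
  show _ = ρ (a 0) * (-T) + ∑ i : Fin 0, _ + ((-1 : ℂ) ^ (0 + 1)) • ((-T) * ρ (a 0))
  simp
  abel
end
end S19

end

/-- let `A = H_{1,0,c}(Γ_N)` (parameter `k = 0`), `B = H_{1,c}(Γ)`, `Y` a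
finite dimensional irreducible `B`-module, and `W` a finite dimensional irreducible
representation of `S_N` with `Hom_{S_N}(𝔥 ⊗ W, W) = 0` (`𝔥` the reflection
representation), and let `M = W ⊗ Y^{⊗N}` be the `A`-module on which `Γ^N` acts
factorwise, `S_N` acts on `W` while permuting the tensor factors, and `x_i, y_i` act as
`x, y` on the `i`-th tensor factor.  Then the Hochschild cohomology `H¹(A, End_ℂ M)`
vanishes: every 1-cocycle is a coboundary. -/
theorem stmt_19 (Γ : Subgroup SL2) [Fintype Γ] [DecidableEq Γ] (c : Γ → ℂ) (N : ℕ)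
    (Y : Type) [AddCommGroup Y] [Module ℂ Y] [FiniteDimensional ℂ Y] [Nontrivial Y]
    (ρY : Hone Γ c →ₐ[ℂ] Module.End ℂ Y)
    (hYirr : ∀ U : Submodule ℂ Y, (∀ b : Hone Γ c, U.map (ρY b) ≤ U) → U = ⊥ ∨ U = ⊤)
    (W : Type) [AddCommGroup W] [Module ℂ W] [FiniteDimensional ℂ W] [Nontrivial W]
    (ρW : Representation ℂ (Equiv.Perm (Fin N)) W)
    (hWirr : ∀ U : Submodule ℂ W,
      (∀ σ : Equiv.Perm (Fin N), U.map (ρW σ) ≤ U) → U = ⊥ ∨ U = ⊤)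
    -- the rectangle condition: `Hom_{S_N}(𝔥 ⊗ W, W) = 0`
    (hrect : ∀ T : (↥(hplane N) ⊗[ℂ] W) →ₗ[ℂ] W,
      (∀ (σ : Equiv.Perm (Fin N)) (v : hplane N) (w : W),
        T (permH σ v ⊗ₜ[ℂ] ρW σ w) = ρW σ (T (v ⊗ₜ[ℂ] w))) → T = 0)
    -- the `A`-module structure on `M = W ⊗ Y^{⊗N}`
    (ρM : HN Γ N 0 c →ₐ[ℂ] Module.End ℂ (W ⊗[ℂ] (⨂[ℂ] _ : Fin N, Y)))
    (hMG : ∀ (g : WP Γ N) (w : W) (v : Fin N → Y),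
      ρM (hG Γ N 0 c g) (w ⊗ₜ[ℂ] PiTensorProduct.tprod ℂ v) =
        ρW g.right w ⊗ₜ[ℂ]
          PiTensorProduct.tprod ℂ fun i => ρY (oneG Γ c (g.left i)) (v (g.right⁻¹ i)))
    (hMX : ∀ (i : Fin N) (p : Fin 2) (w : W) (v : Fin N → Y),
      ρM (hX Γ N 0 c i p) (w ⊗ₜ[ℂ] PiTensorProduct.tprod ℂ v) =
        w ⊗ₜ[ℂ] PiTensorProduct.tprod ℂ fun l =>
          if l = i then ρY (oneX Γ c p) (v l) else v l) :
    Zc (bimodEnd ρM) 1 ≤ Bc (bimodEnd ρM) 0 := by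
  have hs := burnside_surj ρY hYirr
  have hA := S19.act_formula Γ N c ρY ρW ρM hMG hMX
  exact S19.coc_to_cob ρM fun D hD => S19.D_inner Γ N c hs hA hD
end
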